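/- arXiv:2303.07921 — 2 statements merged into one kernel-verified Lean document; each statement's English description precedes it below -/
import Mathlib

section
/- Let ρ : [0,T) × ℝ → (0,∞) be a smooth solution of the renormalized curvature flow PDE ∂_t ρ = ρ² ∂²_θ ρ + ρ²(ρ − 2h_t), 2π-periodic in θ and satisfying the closure conditions for every t. Then the quantity ∫₀^{2π} (ρ(t,θ)² − (∂_θ ρ(t,θ))² − 4 h_t ρ(t,θ)) dθ is non-decreasing in t; consequently, with c₀ := −∫₀^{2π} (ρ(0,θ)² − (∂_θ ρ(0,θ))² − 4 h₀ ρ(0,θ)) dθ, one has for all t ∈ [0,T): ∫₀^{2π} (∂_θ ρ(t,θ))² dθ ≤ ∫₀^{2π} ρ(t,θ)² dθ − 4 h_t ∫₀^{2π} ρ(t,θ) dθ + c₀. -/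
/-!
Write `σ`, `λ`, `h = σ/λ` for perimeter, area and their ratio, and `R = ∫ ρ dθ`.

Integrating by parts in `θ` (periodicity removes the boundary terms) and using
`ρ_θθ + ρ - 2h = ρ_t / ρ²`, the energy `∫ (ρ² - ρ_θ² - 4hρ) dθ` has derivative
`2 ∫ (ρ_t / ρ)² dθ - 4 h' R`, so everything reduces to `h' ≤ 0` (`hRatio_deriv_ineq`).

The radius of curvature `1/ρ` moves with velocity `-(ρ_θθ + ρ - 2h)`. Hence `σ' = -R + 4πh`, and
pairing with the support function `p`, for which `p + p'' = 1/ρ`, gives `λ' = -2π + 2hσ`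
(`area_variation`). Therefore `λ h' = -(R - 6πh + 2h²σ)`.

Cauchy–Schwarz gives `R σ ≥ 4π²` (`four_pi_sq_le`), so `σ (R - 6πh + 2h²σ)` is at least
`2 (hσ - π) (hσ - 2π)`. Thus `σ² ≥ 2πλ` is enough, and the sharp isoperimetric inequality is not
needed: `σ² ≥ 8λ` follows from bounding the support function by the distance to the base point
along the shorter arc (`eight_encArea_le`).

At the initial time only one-sided smoothness is available; there the energy is merely shown to be
continuous, and monotonicity follows from the sign of the derivative at interior times.
-/

open Real Set Filter MeasureTheory Topology NNReal

/-- The perimeter of the strictly convex curve with curvature function `ρ`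
in tangent-angle coordinates: `σ = ∫₀^{2π} dθ/ρ(θ)`. -/
noncomputable def perim (ρ : ℝ → ℝ) : ℝ := ∫ θ in (0:ℝ)..(2 * π), 1 / ρ θ

/-- The curve associated to a curvature function `ρ` in tangent-angle coordinates:
`C(θ) = (∫₀^θ cos β/ρ(β) dβ, ∫₀^θ sin β/ρ(β) dβ)`. -/
noncomputable def curveP (ρ : ℝ → ℝ) (θ : ℝ) : ℝ × ℝ :=
  (∫ β in (0:ℝ)..θ, Real.cos β / ρ β, ∫ β in (0:ℝ)..θ, Real.sin β / ρ β)

/-- The enclosed area `λ = ½ ∫₀^{2π} ⟨C(θ), ν(θ)⟩/ρ(θ) dθ`, with outward normal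
`ν(θ) = (sin θ, −cos θ)`. -/
noncomputable def encArea (ρ : ℝ → ℝ) : ℝ :=
  (1 / 2) * ∫ θ in (0:ℝ)..(2 * π),
    ((curveP ρ θ).1 * Real.sin θ - (curveP ρ θ).2 * Real.cos θ) / ρ θ

/-- The ratio `h = σ/λ`. -/
noncomputable def hRatio (ρ : ℝ → ℝ) : ℝ := perim ρ / encArea ρ

/-- `ρ : [0,T) × ℝ → (0,∞)` is a smooth solution of the renormalized curvature flow PDE
`∂_t ρ = ρ² ∂²_θ ρ + ρ²(ρ − 2 h_t)`, `2π`-periodic in `θ` and satisfying the closure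
conditions for every `t`. -/
def IsRCFSolution (T : ℝ) (ρ : ℝ → ℝ → ℝ) : Prop :=
  ContDiffOn ℝ (⊤ : ℕ∞) (Function.uncurry ρ) (Ico 0 T ×ˢ (univ : Set ℝ)) ∧
  (∀ t ∈ Ico (0:ℝ) T, ∀ θ : ℝ, 0 < ρ t θ) ∧
  (∀ t ∈ Ico (0:ℝ) T, ∀ θ : ℝ, ρ t (θ + 2 * π) = ρ t θ) ∧
  (∀ t ∈ Ico (0:ℝ) T, (∫ θ in (0:ℝ)..(2 * π), Real.cos θ / ρ t θ) = 0) ∧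
  (∀ t ∈ Ico (0:ℝ) T, (∫ θ in (0:ℝ)..(2 * π), Real.sin θ / ρ t θ) = 0) ∧
  (∀ t ∈ Ico (0:ℝ) T, ∀ θ : ℝ,
    HasDerivWithinAt (fun s => ρ s θ)
      ((ρ t θ) ^ 2 * iteratedDeriv 2 (ρ t) θ + (ρ t θ) ^ 2 * (ρ t θ - 2 * hRatio (ρ t)))
      (Ico 0 T) t)

/-! ### Parametric integrals and partial derivatives -/

/-- Differentiation under the integral sign for a jointly continuous time derivative. -/
theorem hasDerivAt_integral_param {T t a b : ℝ} {F F' : ℝ → ℝ → ℝ} (ht : t ∈ Ioo 0 T)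
    (hF : ContinuousOn (Function.uncurry F) (Ioo 0 T ×ˢ univ))
    (hF' : ContinuousOn (Function.uncurry F') (Ioo 0 T ×ˢ univ))
    (hd : ∀ s ∈ Ioo 0 T, ∀ θ, HasDerivAt (fun s => F s θ) (F' s θ) s) :
    HasDerivAt (fun s => ∫ θ in a..b, F s θ) (∫ θ in a..b, F' t θ) t := by
  obtain ⟨h0, hT⟩ := ht
  have hsub : Icc (t / 2) ((t + T) / 2) ⊆ Ioo 0 T := fun s hs =>
    ⟨by linarith [hs.1], by linarith [hs.2]⟩
  have slice : ∀ {G : ℝ → ℝ → ℝ}, ContinuousOn (Function.uncurry G) (Ioo 0 T ×ˢ univ) →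
      ∀ s ∈ Ioo 0 T, Continuous (G s) := fun {G} hG s hs =>
    hG.comp_continuous (f := fun θ : ℝ => (s, θ)) (by fun_prop) (fun θ => ⟨hs, trivial⟩)
  obtain ⟨C, hC⟩ := ((isCompact_Icc (a := t / 2) (b := (t + T) / 2)).prod
    (isCompact_uIcc (a := a) (b := b))).exists_bound_of_continuousOn
      (hF'.mono (prod_mono hsub (subset_univ _)))
  refine (intervalIntegral.hasDerivAt_integral_of_dominated_loc_of_deriv_le
    (s := Icc (t / 2) ((t + T) / 2)) (bound := fun _ => C)
    (Icc_mem_nhds (by linarith) (by linarith)) ?_ ((slice hF t ⟨h0, hT⟩).intervalIntegrable _ _)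
    (slice hF' t ⟨h0, hT⟩).aestronglyMeasurable ?_ (by simp) ?_).2
  · filter_upwards [Ioo_mem_nhds h0 hT] with s hs
    exact (slice hF s hs).aestronglyMeasurable
  · exact Eventually.of_forall fun θ hθ s hs => hC (s, θ) ⟨hs, uIoc_subset_uIcc hθ⟩
  · exact Eventually.of_forall fun θ _ s hs => hd s (hsub hs) θ

theorem continuousOn_primitive_param {A : Set ℝ} {F : ℝ → ℝ → ℝ}
    (hF : ContinuousOn (Function.uncurry F) (A ×ˢ univ)) :
    ContinuousOn (Function.uncurry fun t θ => ∫ β in (0:ℝ)..θ, F t β) (A ×ˢ univ) := by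
  have h1 : Continuous (Function.uncurry fun (p : (A ×ˢ (univ : Set ℝ) : Set (ℝ × ℝ))) (β : ℝ) =>
      F p.1.1 β) :=
    hF.comp_continuous (f := fun q : (A ×ˢ (univ : Set ℝ) : Set (ℝ × ℝ)) × ℝ => (q.1.1.1, q.2))
      (by fun_prop) (fun q => ⟨q.1.2.1, trivial⟩)
  rw [continuousOn_iff_continuous_domRestrict]
  exact intervalIntegral.continuous_parametric_intervalIntegral_of_continuous h1
    (s := fun p => p.1.2) (by fun_prop)

theorem continuousOn_integral_param {A : Set ℝ} {F : ℝ → ℝ → ℝ} (b : ℝ)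
    (hF : ContinuousOn (Function.uncurry F) (A ×ˢ univ)) :
    ContinuousOn (fun t => ∫ β in (0:ℝ)..b, F t β) A :=
  (continuousOn_primitive_param hF).comp (f := fun t : ℝ => (t, b)) (by fun_prop)
    (fun t ht => ⟨ht, trivial⟩)

theorem continuous_slice {A : Set ℝ} {F : ℝ → ℝ → ℝ}
    (hF : ContinuousOn (Function.uncurry F) (A ×ˢ univ)) {t : ℝ} (ht : t ∈ A) :
    Continuous (F t) :=
  hF.comp_continuous (f := fun θ : ℝ => (t, θ)) (by fun_prop) (fun _ => ⟨ht, trivial⟩)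

theorem contDiffOn_partial {T : ℝ} {f : ℝ × ℝ → ℝ} (v : ℝ × ℝ)
    (hf : ContDiffOn ℝ (⊤ : ℕ∞) f (Ico 0 T ×ˢ (univ : Set ℝ))) :
    ContDiffOn ℝ (⊤ : ℕ∞) (fun p => fderivWithin ℝ f (Ico 0 T ×ˢ univ) p v)
      (Ico 0 T ×ˢ (univ : Set ℝ)) := 
  (hf.fderivWithin ((uniqueDiffOn_Ico 0 T).prod uniqueDiffOn_univ)
    (by exact_mod_cast le_top)).clm_apply contDiffOn_const

theorem hasDerivAt_angle {T t θ : ℝ} {f : ℝ × ℝ → ℝ}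
    (hf : ContDiffOn ℝ (⊤ : ℕ∞) f (Ico 0 T ×ˢ (univ : Set ℝ))) (ht : t ∈ Ico 0 T) :
    HasDerivAt (fun θ => f (t, θ)) (fderivWithin ℝ f (Ico 0 T ×ˢ univ) (t, θ) (0, 1)) θ := by
  have h1 := ((hf.differentiableOn (by simp)) (t, θ) ⟨ht, trivial⟩).hasFDerivWithinAt
  have h2 : HasDerivWithinAt (fun θ : ℝ => (t, θ)) ((0 : ℝ), (1 : ℝ)) univ θ :=
    ((hasDerivAt_const θ t).prodMk (hasDerivAt_id θ)).hasDerivWithinAt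
  rw [← hasDerivWithinAt_univ]
  exact h1.comp_hasDerivWithinAt θ h2 (fun x _ => ⟨ht, trivial⟩)

theorem hasDerivAt_time {T t θ : ℝ} {f : ℝ × ℝ → ℝ}
    (hf : ContDiffOn ℝ (⊤ : ℕ∞) f (Ico 0 T ×ˢ (univ : Set ℝ))) (ht : t ∈ Ioo 0 T) :
    HasDerivAt (fun s => f (s, θ)) (fderivWithin ℝ f (Ico 0 T ×ˢ univ) (t, θ) (1, 0)) t := by
  have h1 := ((hf.differentiableOn (by simp)) (t, θ) ⟨Ioo_subset_Ico_self ht, trivial⟩).hasFDerivWithinAt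
  have h2 : HasDerivWithinAt (fun s : ℝ => (s, θ)) ((1 : ℝ), (0 : ℝ)) (Ico 0 T) t :=
    ((hasDerivAt_id t).prodMk (hasDerivAt_const t θ)).hasDerivWithinAt
  have h3 : MapsTo (fun s : ℝ => (s, θ)) (Ico 0 T) (Ico 0 T ×ˢ univ) := fun x hx => ⟨hx, trivial⟩
  exact (h1.comp_hasDerivWithinAt t h2 h3).hasDerivAt (Ico_mem_nhds ht.1 ht.2)

/-- Symmetry of second derivatives within the half-open strip, initial time included. -/
theorem mixed_partial {T t θ : ℝ} {f : ℝ × ℝ → ℝ}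
    (hf : ContDiffOn ℝ (⊤ : ℕ∞) f (Ico 0 T ×ˢ (univ : Set ℝ))) (ht : t ∈ Ico 0 T) (v w : ℝ × ℝ) :
    fderivWithin ℝ (fun p => fderivWithin ℝ f (Ico 0 T ×ˢ univ) p v) (Ico 0 T ×ˢ univ) (t, θ) w
     = fderivWithin ℝ (fun p => fderivWithin ℝ f (Ico 0 T ×ˢ univ) p w) (Ico 0 T ×ˢ univ) (t, θ) v := by
  have hu : UniqueDiffOn ℝ (Ico 0 T ×ˢ (univ : Set ℝ)) :=
    (uniqueDiffOn_Ico 0 T).prod uniqueDiffOn_univ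
  have hm : (t, θ) ∈ Ico 0 T ×ˢ (univ : Set ℝ) := ⟨ht, trivial⟩
  have hs : IsSymmSndFDerivWithinAt ℝ f (Ico 0 T ×ˢ univ) (t, θ) := by
    refine (hf _ hm).isSymmSndFDerivWithinAt (by
      rw [minSmoothness_of_isRCLikeNormedField]
      exact WithTop.coe_le_coe.2 (le_top : (2 : ℕ∞) ≤ ⊤)) hu ?_ hm
    rw [interior_prod_eq, closure_prod_eq, interior_Ico, closure_Ioo (ht.1.trans_lt ht.2).ne]
    simpa using ⟨ht.1, ht.2.le⟩
  have hd := (hf.fderivWithin hu (m := (⊤ : ℕ∞)) (by exact_mod_cast le_top)).differentiableOn (by simp) _ hm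
  have key : ∀ v : ℝ × ℝ, fderivWithin ℝ (fun p => fderivWithin ℝ f (Ico 0 T ×ˢ univ) p v)
      (Ico 0 T ×ˢ univ) (t, θ) =
      (fderivWithin ℝ (fderivWithin ℝ f (Ico 0 T ×ˢ univ)) (Ico 0 T ×ˢ univ) (t, θ)).flip v := by
    intro v
    rw [fderivWithin_clm_apply (hu _ hm) hd (differentiableWithinAt_const _)]
    simp
  rw [key, key]
  exact hs w v

/-! ### Geometry of a fixed closed convex curve -/

/-- The support function `⟨C(θ), ν(θ)⟩`, relative to the base point `C(0)`, as a single integral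
from the base point. -/
theorem support_eq_left {ρ : ℝ → ℝ} (hc : Continuous ρ) (hp : ∀ θ, 0 < ρ θ) (θ : ℝ) :
    (curveP ρ θ).1 * Real.sin θ - (curveP ρ θ).2 * Real.cos θ
      = ∫ β in (0:ℝ)..θ, Real.sin (θ - β) / ρ β := by
  have hne : ∀ θ, ρ θ ≠ 0 := fun θ => (hp θ).ne'
  simp only [curveP]
  rw [← intervalIntegral.integral_mul_const, ← intervalIntegral.integral_mul_const,
    ← intervalIntegral.integral_sub]
  · refine intervalIntegral.integral_congr fun β _ => ?_
    simp only [Real.sin_sub]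
    ring
  all_goals
    apply Continuous.intervalIntegrable
    fun_prop (disch := exact hne)

/-- The same support function computed from the other end of the curve; this is where closure
enters. -/
theorem support_eq_right {ρ : ℝ → ℝ} (hc : Continuous ρ) (hp : ∀ θ, 0 < ρ θ)
    (h1 : (∫ θ in (0:ℝ)..(2 * π), Real.cos θ / ρ θ) = 0)
    (h2 : (∫ θ in (0:ℝ)..(2 * π), Real.sin θ / ρ θ) = 0) (θ : ℝ) :
    (curveP ρ θ).1 * Real.sin θ - (curveP ρ θ).2 * Real.cos θ
      = ∫ β in θ..(2 * π), Real.sin (β - θ) / ρ β := by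
  have hne : ∀ θ, ρ θ ≠ 0 := fun θ => (hp θ).ne'
  have hci : ∀ a b, IntervalIntegrable (fun β => Real.cos β / ρ β) volume a b := fun a b =>
    Continuous.intervalIntegrable (by fun_prop (disch := exact hne)) _ _
  have hsi : ∀ a b, IntervalIntegrable (fun β => Real.sin β / ρ β) volume a b := fun a b =>
    Continuous.intervalIntegrable (by fun_prop (disch := exact hne)) _ _
  have e1 := intervalIntegral.integral_add_adjacent_intervals (hci 0 θ) (hci θ (2 * π))
  have e2 := intervalIntegral.integral_add_adjacent_intervals (hsi 0 θ) (hsi θ (2 * π))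
  have e3 : (∫ β in θ..(2 * π), Real.sin (β - θ) / ρ β) =
      (∫ β in θ..(2 * π), Real.sin β / ρ β) * Real.cos θ
        - (∫ β in θ..(2 * π), Real.cos β / ρ β) * Real.sin θ := by
    rw [← intervalIntegral.integral_mul_const, ← intervalIntegral.integral_mul_const,
      ← intervalIntegral.integral_sub ((hsi _ _).mul_const _) ((hci _ _).mul_const _)]
    refine intervalIntegral.integral_congr fun β _ => ?_
    simp only [Real.sin_sub]
    ring
  rw [e3]
  simp only [curveP]
  rw [h1] at e1
  rw [h2] at e2
  linear_combination Real.sin θ * e1 - Real.cos θ * e2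

theorem continuous_support {ρ : ℝ → ℝ} (hc : Continuous ρ) (hp : ∀ θ, 0 < ρ θ) :
    Continuous fun θ => (curveP ρ θ).1 * Real.sin θ - (curveP ρ θ).2 * Real.cos θ := by
  have hne : ∀ θ, ρ θ ≠ 0 := fun θ => (hp θ).ne'
  have hX : Continuous fun θ => (curveP ρ θ).1 :=
    intervalIntegral.continuous_primitive (fun a b =>
      Continuous.intervalIntegrable (by fun_prop (disch := exact hne)) _ _) 0
  have hY : Continuous fun θ => (curveP ρ θ).2 :=
    intervalIntegral.continuous_primitive (fun a b =>
      Continuous.intervalIntegrable (by fun_prop (disch := exact hne)) _ _) 0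
  fun_prop

theorem perim_pos {ρ : ℝ → ℝ} (hc : Continuous ρ) (hp : ∀ θ, 0 < ρ θ) : 0 < perim ρ :=
  intervalIntegral.intervalIntegral_pos_of_pos
    (Continuous.intervalIntegrable (by fun_prop (disch := exact fun θ => (hp θ).ne')) _ _)
    (fun θ => one_div_pos.2 (hp θ)) (by positivity)

/-- The area is positive, so `hRatio` is a genuine quotient: the support function is positive on
`(0, π]` by `support_eq_left` and on `[π, 2π)` by `support_eq_right`. -/
theorem encArea_pos {ρ : ℝ → ℝ} (hc : Continuous ρ) (hp : ∀ θ, 0 < ρ θ)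
    (h1 : (∫ θ in (0:ℝ)..(2 * π), Real.cos θ / ρ θ) = 0)
    (h2 : (∫ θ in (0:ℝ)..(2 * π), Real.sin θ / ρ θ) = 0) : 0 < encArea ρ := by
  have hne : ∀ θ, ρ θ ≠ 0 := fun θ => (hp θ).ne'
  have hcs := continuous_support hc hp
  refine mul_pos (by norm_num) (intervalIntegral.intervalIntegral_pos_of_pos_on
    (Continuous.intervalIntegrable (by fun_prop (disch := exact hne)) _ _) ?_ (by positivity))
  rintro θ ⟨hθ0, hθ1⟩
  refine div_pos ?_ (hp θ)
  rcases le_total θ π with h | h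
  · rw [support_eq_left hc hp]
    refine intervalIntegral.intervalIntegral_pos_of_pos_on
      (Continuous.intervalIntegrable (by fun_prop (disch := exact hne)) _ _) ?_ hθ0
    exact fun β hβ => div_pos (Real.sin_pos_of_pos_of_lt_pi (by linarith [hβ.2])
      (by linarith [hβ.1])) (hp β)
  · rw [support_eq_right hc hp h1 h2]
    refine intervalIntegral.intervalIntegral_pos_of_pos_on
      (Continuous.intervalIntegrable (by fun_prop (disch := exact hne)) _ _) ?_ hθ1
    exact fun β hβ => div_pos (Real.sin_pos_of_pos_of_lt_pi (by linarith [hβ.1])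
      (by linarith [hβ.2])) (hp β)

/-- A weak isoperimetric inequality, `8 λ ≤ σ²`. The support function is at most the arclength to
the base point along either arc; integrating the shorter one of the two gives `2 λ ≤ σ² / 4`. -/
theorem eight_encArea_le {ρ : ℝ → ℝ} (hc : Continuous ρ) (hp : ∀ θ, 0 < ρ θ)
    (h1 : (∫ θ in (0:ℝ)..(2 * π), Real.cos θ / ρ θ) = 0)
    (h2 : (∫ θ in (0:ℝ)..(2 * π), Real.sin θ / ρ θ) = 0) : 8 * encArea ρ ≤ perim ρ ^ 2 := by
  have hne : ∀ θ, ρ θ ≠ 0 := fun θ => (hp θ).ne'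
  have hcs := continuous_support hc hp
  have hu : Continuous fun θ => 1 / ρ θ := by fun_prop (disch := exact hne)
  -- `s` is the arclength from the base point and `a` is the halfway point of the curve.
  set s : ℝ → ℝ := fun θ => ∫ β in (0:ℝ)..θ, 1 / ρ β with hs
  have hsd : ∀ θ, HasDerivAt s (1 / ρ θ) θ := fun θ =>
    (hu.integral_hasStrictDerivAt 0 θ).hasDerivAt
  have hsc : Continuous s := continuous_iff_continuousAt.2 fun θ => (hsd θ).continuousAt
  have hs0 : s 0 = 0 := by simp [hs]
  have hs1 : s (2 * π) = perim ρ := rfl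
  have hσ := perim_pos hc hp
  have hπ : (0:ℝ) ≤ 2 * π := by positivity
  obtain ⟨a, ha, hsa⟩ : perim ρ / 2 ∈ s '' Icc 0 (2 * π) :=
    intermediate_value_Icc hπ hsc.continuousOn
      ⟨by rw [hs0]; positivity, by rw [hs1]; linarith⟩
  have b1 : ∀ θ ∈ Icc 0 a, (curveP ρ θ).1 * Real.sin θ - (curveP ρ θ).2 * Real.cos θ ≤ s θ := by
    intro θ hθ
    rw [support_eq_left hc hp]
    refine intervalIntegral.integral_mono_on hθ.1
      (Continuous.intervalIntegrable (by fun_prop (disch := exact hne)) _ _)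
      (hu.intervalIntegrable _ _) fun β _ => ?_
    exact div_le_div_of_nonneg_right (Real.sin_le_one _) (hp β).le
  have b2 : ∀ θ ∈ Icc a (2 * π),
      (curveP ρ θ).1 * Real.sin θ - (curveP ρ θ).2 * Real.cos θ ≤ perim ρ - s θ := by
    intro θ hθ
    rw [support_eq_right hc hp h1 h2, ← hs1, hs, intervalIntegral.integral_interval_sub_left
      (hu.intervalIntegrable _ _) (hu.intervalIntegrable _ _)]
    refine intervalIntegral.integral_mono_on hθ.2
      (Continuous.intervalIntegrable (by fun_prop (disch := exact hne)) _ _)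
      (hu.intervalIntegrable _ _) fun β _ => ?_
    exact div_le_div_of_nonneg_right (Real.sin_le_one _) (hp β).le
  have hii : ∀ x y, IntervalIntegrable (fun θ => ((curveP ρ θ).1 * Real.sin θ
      - (curveP ρ θ).2 * Real.cos θ) / ρ θ) volume x y := fun x y =>
    Continuous.intervalIntegrable (by fun_prop (disch := exact hne)) _ _
  have c1 : (∫ θ in (0:ℝ)..a, ((curveP ρ θ).1 * Real.sin θ - (curveP ρ θ).2 * Real.cos θ) / ρ θ)
      ≤ perim ρ ^ 2 / 8 := by
    have hi : IntervalIntegrable (fun θ => s θ / ρ θ) volume 0 a :=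
      Continuous.intervalIntegrable (by fun_prop (disch := exact hne)) _ _
    calc _ ≤ ∫ θ in (0:ℝ)..a, s θ / ρ θ :=
          intervalIntegral.integral_mono_on ha.1 (hii _ _) hi fun θ hθ =>
            div_le_div_of_nonneg_right (b1 θ hθ) (hp θ).le
      _ = s a ^ 2 / 2 - s 0 ^ 2 / 2 := by
          refine intervalIntegral.integral_eq_sub_of_hasDerivAt
            (f := fun θ => s θ ^ 2 / 2) (fun θ _ => ?_) hi
          refine (((hsd θ).pow 2).div_const 2).congr_deriv ?_
          push_cast; ring
      _ = _ := by rw [hsa, hs0]; ring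
  have c2 : (∫ θ in a..(2 * π),
      ((curveP ρ θ).1 * Real.sin θ - (curveP ρ θ).2 * Real.cos θ) / ρ θ) ≤ perim ρ ^ 2 / 8 := by
    have hi : IntervalIntegrable (fun θ => (perim ρ - s θ) / ρ θ) volume a (2 * π) :=
      Continuous.intervalIntegrable (by fun_prop (disch := exact hne)) _ _
    calc _ ≤ ∫ θ in a..(2 * π), (perim ρ - s θ) / ρ θ :=
          intervalIntegral.integral_mono_on ha.2 (hii _ _) hi fun θ hθ =>
            div_le_div_of_nonneg_right (b2 θ hθ) (hp θ).le
      _ = -((perim ρ - s (2 * π)) ^ 2 / 2) - -((perim ρ - s a) ^ 2 / 2) := by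
          refine intervalIntegral.integral_eq_sub_of_hasDerivAt
            (f := fun θ => -((perim ρ - s θ) ^ 2 / 2)) (fun θ _ => ?_) hi
          refine ((((hsd θ).const_sub (perim ρ)).pow 2).div_const 2).neg.congr_deriv ?_
          push_cast; ring
      _ = _ := by rw [hsa, hs1]; ring
  have := intervalIntegral.integral_add_adjacent_intervals (hii 0 a) (hii a (2 * π))
  rw [encArea, ← this]
  linarith

/-- Cauchy–Schwarz, obtained from `∫ (a ρ - 1)² / ρ ≥ 0` with the optimal `a = 2π / ∫ ρ`. -/
theorem four_pi_sq_le {ρ : ℝ → ℝ} (hc : Continuous ρ) (hp : ∀ θ, 0 < ρ θ) :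
    4 * π ^ 2 ≤ perim ρ * ∫ θ in (0:ℝ)..(2 * π), ρ θ := by
  have hu : Continuous fun θ => 1 / ρ θ := by fun_prop (disch := exact fun θ => (hp θ).ne')
  have hR : 0 < ∫ θ in (0:ℝ)..(2 * π), ρ θ :=
    intervalIntegral.intervalIntegral_pos_of_pos (hc.intervalIntegrable _ _) hp (by positivity)
  set R := ∫ θ in (0:ℝ)..(2 * π), ρ θ with hRdef
  set a := 2 * π / R with ha
  have h0 : 0 ≤ ∫ θ in (0:ℝ)..(2 * π), (a ^ 2 * ρ θ - 2 * a + 1 / ρ θ) := by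
    refine intervalIntegral.integral_nonneg (by positivity) fun θ _ => ?_
    have := hp θ
    have e : a ^ 2 * ρ θ - 2 * a + 1 / ρ θ = (a * ρ θ - 1) ^ 2 / ρ θ := by
      field_simp; ring
    rw [e]; positivity
  have e : (∫ θ in (0:ℝ)..(2 * π), (a ^ 2 * ρ θ - 2 * a + 1 / ρ θ))
      = a ^ 2 * R - 4 * π * a + perim ρ := by
    rw [intervalIntegral.integral_add (Continuous.intervalIntegrable (by fun_prop) _ _)
      (hu.intervalIntegrable _ _), intervalIntegral.integral_sub
      (Continuous.intervalIntegrable (by fun_prop) _ _) (by simp),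
      intervalIntegral.integral_const_mul, intervalIntegral.integral_const, ← hRdef]
    simp only [perim, smul_eq_mul]; ring
  rw [e, ha] at h0
  have e2 : R * ((2 * π / R) ^ 2 * R - 4 * π * (2 * π / R) + perim ρ)
      = perim ρ * R - 4 * π ^ 2 := by field_simp; ring
  have := mul_nonneg hR.le h0
  linarith

/-- The derivative of `h = σ/λ` is nonpositive once `σ' = -∫ ρ + 4πh` and `λ' = -2π + 2hσ` are
inserted in the quotient rule. -/
theorem hRatio_deriv_ineq {ρ : ℝ → ℝ} (hc : Continuous ρ) (hp : ∀ θ, 0 < ρ θ)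
    (h1 : (∫ θ in (0:ℝ)..(2 * π), Real.cos θ / ρ θ) = 0)
    (h2 : (∫ θ in (0:ℝ)..(2 * π), Real.sin θ / ρ θ) = 0) :
    ((-(∫ θ in (0:ℝ)..(2 * π), ρ θ) + 4 * π * hRatio ρ) * encArea ρ
      - perim ρ * (-2 * π + 2 * hRatio ρ * perim ρ)) / encArea ρ ^ 2 ≤ 0 := by
  have hσ := perim_pos hc hp
  have hl := encArea_pos hc hp h1 h2
  have h8 := eight_encArea_le hc hp h1 h2
  have hCS := four_pi_sq_le hc hp
  set R := ∫ θ in (0:ℝ)..(2 * π), ρ θ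
  have hh : hRatio ρ * encArea ρ = perim ρ := div_mul_cancel₀ _ hl.ne'
  set h := hRatio ρ
  set σ := perim ρ
  set l := encArea ρ
  have hx : 8 ≤ h * σ := by
    by_contra! hlt
    nlinarith
  have hpi := Real.pi_lt_d2
  have hpi0 := Real.pi_gt_three
  -- With `x = hσ`, Cauchy–Schwarz bounds this below by `2 (x - π) (x - 2π)`, and `x ≥ 8 > 2π`.
  have key : 0 ≤ σ * (R - 6 * π * h + 2 * h ^ 2 * σ) := by
    have : 0 ≤ 2 * (h * σ - π) * (h * σ - 2 * π) :=
      mul_nonneg (by linarith) (by linarith)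
    nlinarith
  have key2 : 0 ≤ R - 6 * π * h + 2 * h ^ 2 * σ := nonneg_of_mul_nonneg_right key hσ
  refine div_nonpos_of_nonpos_of_nonneg ?_ (by positivity)
  have : (-R + 4 * π * h) * l - σ * (-2 * π + 2 * h * σ)
      = -(l * (R - 6 * π * h + 2 * h ^ 2 * σ)) := by
    rw [← hh]; ring
  rw [this]
  exact neg_nonpos.2 (mul_nonneg hl.le key2)

/-- First variation of twice the area when `1/ρ` moves with velocity `v = -(ρ'' + ρ - 2h)`. With
`p` and `q` the support-type functions `X sin - Y cos` and `A sin - B cos`, an explicit primitive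
of the integrand comes from three identities: `q/ρ - p v = (A Y - B X)'`,
`p (ρ'' + ρ) = (p ρ' - p' ρ)' + 1` and `p = 1/ρ - p''`. -/
theorem area_variation {ρ d1 d2 v : ℝ → ℝ} {h : ℝ} (hp : ∀ θ, 0 < ρ θ)
    (hd1 : ∀ θ, HasDerivAt ρ (d1 θ) θ) (hd2 : ∀ θ, HasDerivAt d1 (d2 θ) θ) (hc2 : Continuous d2)
    (h1 : (∫ θ in (0:ℝ)..(2 * π), Real.cos θ / ρ θ) = 0)
    (h2 : (∫ θ in (0:ℝ)..(2 * π), Real.sin θ / ρ θ) = 0)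
    (hv : ∀ θ, v θ = -(d2 θ + ρ θ - 2 * h)) :
    (∫ θ in (0:ℝ)..(2 * π),
      (((∫ β in (0:ℝ)..θ, Real.cos β * v β) * Real.sin θ
        - (∫ β in (0:ℝ)..θ, Real.sin β * v β) * Real.cos θ) / ρ θ
        + ((curveP ρ θ).1 * Real.sin θ - (curveP ρ θ).2 * Real.cos θ) * v θ))
      = 2 * (-2 * π + 2 * h * perim ρ) := by
  have hne : ∀ θ, ρ θ ≠ 0 := fun θ => (hp θ).ne'
  have hc : Continuous ρ := continuous_iff_continuousAt.2 fun θ => (hd1 θ).continuousAt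
  have hc1 : Continuous d1 := continuous_iff_continuousAt.2 fun θ => (hd2 θ).continuousAt
  have hcv : Continuous v := by rw [funext hv]; fun_prop
  simp only [curveP, perim]
  set X : ℝ → ℝ := fun θ => ∫ β in (0:ℝ)..θ, Real.cos β / ρ β with hX
  set Y : ℝ → ℝ := fun θ => ∫ β in (0:ℝ)..θ, Real.sin β / ρ β with hY
  set A : ℝ → ℝ := fun θ => ∫ β in (0:ℝ)..θ, Real.cos β * v β with hA
  set B : ℝ → ℝ := fun θ => ∫ β in (0:ℝ)..θ, Real.sin β * v β with hB
  set s : ℝ → ℝ := fun θ => ∫ β in (0:ℝ)..θ, 1 / ρ β with hs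
  have dX : ∀ θ, HasDerivAt X (Real.cos θ / ρ θ) θ := fun θ =>
    (Continuous.integral_hasStrictDerivAt (by fun_prop (disch := exact hne)) 0 θ).hasDerivAt
  have dY : ∀ θ, HasDerivAt Y (Real.sin θ / ρ θ) θ := fun θ =>
    (Continuous.integral_hasStrictDerivAt (by fun_prop (disch := exact hne)) 0 θ).hasDerivAt
  have dA : ∀ θ, HasDerivAt A (Real.cos θ * v θ) θ := fun θ =>
    (Continuous.integral_hasStrictDerivAt (by fun_prop (disch := exact hne)) 0 θ).hasDerivAt
  have dB : ∀ θ, HasDerivAt B (Real.sin θ * v θ) θ := fun θ =>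
    (Continuous.integral_hasStrictDerivAt (by fun_prop (disch := exact hne)) 0 θ).hasDerivAt
  have ds : ∀ θ, HasDerivAt s (1 / ρ θ) θ := fun θ =>
    (Continuous.integral_hasStrictDerivAt (by fun_prop (disch := exact hne)) 0 θ).hasDerivAt
  have cX : Continuous X := continuous_iff_continuousAt.2 fun θ => (dX θ).continuousAt
  have cY : Continuous Y := continuous_iff_continuousAt.2 fun θ => (dY θ).continuousAt
  have cA : Continuous A := continuous_iff_continuousAt.2 fun θ => (dA θ).continuousAt
  have cB : Continuous B := continuous_iff_continuousAt.2 fun θ => (dB θ).continuousAt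
  have X0 : X 0 = 0 := by simp [hX]
  have Y0 : Y 0 = 0 := by simp [hY]
  have s0 : s 0 = 0 := by simp [hs]
  have X1 : X (2 * π) = 0 := h1
  have Y1 : Y (2 * π) = 0 := h2
  have dp : ∀ θ, HasDerivAt (fun θ => X θ * Real.sin θ - Y θ * Real.cos θ)
      (X θ * Real.cos θ + Y θ * Real.sin θ) θ := fun θ => by
    refine (((dX θ).mul (Real.hasDerivAt_sin θ)).sub
      ((dY θ).mul (Real.hasDerivAt_cos θ))).congr_deriv ?_
    ring
  have dp' : ∀ θ, HasDerivAt (fun θ => X θ * Real.cos θ + Y θ * Real.sin θ)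
      (1 / ρ θ - (X θ * Real.sin θ - Y θ * Real.cos θ)) θ := fun θ => by
    refine (((dX θ).mul (Real.hasDerivAt_cos θ)).add
      ((dY θ).mul (Real.hasDerivAt_sin θ))).congr_deriv ?_
    linear_combination (1 / ρ θ) * Real.sin_sq_add_cos_sq θ
  have key := intervalIntegral.integral_eq_sub_of_hasDerivAt (a := 0) (b := 2 * π)
    (f := fun θ => (A θ * Y θ - B θ * X θ)
      + 2 * (-((X θ * Real.sin θ - Y θ * Real.cos θ) * d1 θ
          - (X θ * Real.cos θ + Y θ * Real.sin θ) * ρ θ) - θ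
        + 2 * h * (s θ - (X θ * Real.cos θ + Y θ * Real.sin θ))))
    (f' := fun θ => (A θ * Real.sin θ - B θ * Real.cos θ) / ρ θ
        + (X θ * Real.sin θ - Y θ * Real.cos θ) * v θ) (fun θ _ => by
      refine ((((dA θ).mul (dY θ)).sub ((dB θ).mul (dX θ))).add
        ((((((dp θ).mul (hd2 θ)).sub ((dp' θ).mul (hd1 θ))).neg.sub (hasDerivAt_id θ)).add
          (((ds θ).sub (dp' θ)).const_mul (2 * h))).const_mul 2)).congr_deriv ?_
      have := hne θ
      rw [hv]
      field_simp
      ring) (Continuous.intervalIntegrable (by fun_prop (disch := exact hne)) _ _)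
  rw [key]
  simp only [X0, Y0, X1, Y1, s0]
  ring

/-! ### Monotonicity of the energy along the flow -/

theorem energy_eq {r d : ℝ → ℝ} (hr : Continuous r) (hd : Continuous d) (c : ℝ) :
    (∫ θ in (0:ℝ)..(2 * π), ((r θ) ^ 2 - (d θ) ^ 2 - c * r θ))
      = (∫ θ in (0:ℝ)..(2 * π), ((r θ) ^ 2 - (d θ) ^ 2)) - c * ∫ θ in (0:ℝ)..(2 * π), r θ := by
  rw [intervalIntegral.integral_sub (Continuous.intervalIntegrable (by fun_prop) _ _)
    (Continuous.intervalIntegrable (by fun_prop) _ _), intervalIntegral.integral_const_mul]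

/-- The main estimate. For `0 < t < T` the derivative of the energy is
`2 ∫ (ρ_t / ρ)² dθ - 4 h' ∫ ρ dθ` with `h' ≤ 0`; at `t = 0` only continuity is used. -/
theorem energy_monotone (T : ℝ) (ρ : ℝ → ℝ → ℝ) (hρ : IsRCFSolution T ρ) :
    MonotoneOn (fun t => ∫ θ in (0:ℝ)..(2 * π),
      ((ρ t θ) ^ 2 - (deriv (ρ t) θ) ^ 2 - 4 * hRatio (ρ t) * ρ t θ)) (Ico 0 T) := by
  obtain ⟨hf, hp, hper, hcl1, hcl2, hpde⟩ := hρ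
  -- `G1 = ∂_θ ρ`, `G2 = ∂_θ² ρ`, `W = ∂_t ρ` and `M = ∂_θ ∂_t ρ`, all taken within `S` so that they
  -- stay continuous up to the initial time.
  set S : Set (ℝ × ℝ) := Ico 0 T ×ˢ univ with hS
  set f : ℝ × ℝ → ℝ := Function.uncurry ρ with hfdef
  have hG1 := contDiffOn_partial (0, 1) hf
  have hW := contDiffOn_partial (1, 0) hf
  have hM := contDiffOn_partial (0, 1) hW
  have hG2 := contDiffOn_partial (0, 1) hG1
  set G1 : ℝ → ℝ → ℝ := fun t θ => fderivWithin ℝ f S (t, θ) (0, 1) with hG1def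
  set W : ℝ → ℝ → ℝ := fun t θ => fderivWithin ℝ f S (t, θ) (1, 0) with hWdef
  set M : ℝ → ℝ → ℝ := fun t θ =>
    fderivWithin ℝ (fun p => fderivWithin ℝ f S p (1, 0)) S (t, θ) (0, 1) with hMdef
  set G2 : ℝ → ℝ → ℝ := fun t θ =>
    fderivWithin ℝ (fun p => fderivWithin ℝ f S p (0, 1)) S (t, θ) (0, 1) with hG2def
  have cρ : ContinuousOn (Function.uncurry ρ) S := hf.continuousOn
  have cG1 : ContinuousOn (Function.uncurry G1) S := hG1.continuousOn
  have cW : ContinuousOn (Function.uncurry W) S := hW.continuousOn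
  have cM : ContinuousOn (Function.uncurry M) S := hM.continuousOn
  have cG2 : ContinuousOn (Function.uncurry G2) S := hG2.continuousOn
  have sub : Ioo 0 T ⊆ Ico 0 T := Ioo_subset_Ico_self
  have subS : Ioo 0 T ×ˢ univ ⊆ S := prod_mono sub subset_rfl
  have dρ : ∀ t ∈ Ico 0 T, ∀ θ, HasDerivAt (ρ t) (G1 t θ) θ := fun t ht θ => hasDerivAt_angle hf ht
  have dG1 : ∀ t ∈ Ico 0 T, ∀ θ, HasDerivAt (G1 t) (G2 t θ) θ := fun t ht θ =>
    hasDerivAt_angle hG1 ht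
  have dW : ∀ t ∈ Ico 0 T, ∀ θ, HasDerivAt (W t) (M t θ) θ := fun t ht θ =>
    hasDerivAt_angle hW ht
  have tρ : ∀ t ∈ Ioo 0 T, ∀ θ, HasDerivAt (fun s => ρ s θ) (W t θ) t := fun t ht θ =>
    hasDerivAt_time hf ht
  have tG1 : ∀ t ∈ Ioo 0 T, ∀ θ, HasDerivAt (fun s => G1 s θ) (M t θ) t := fun t ht θ => by
    have := hasDerivAt_time (θ := θ) hG1 ht
    rwa [mixed_partial hf (sub ht)] at this
  have eG1 : ∀ t ∈ Ico 0 T, deriv (ρ t) = G1 t := fun t ht => funext fun θ => (dρ t ht θ).deriv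
  have eG2 : ∀ t ∈ Ico 0 T, iteratedDeriv 2 (ρ t) = G2 t := fun t ht => by
    rw [iteratedDeriv_succ, iteratedDeriv_one, eG1 t ht]
    exact funext fun θ => (dG1 t ht θ).deriv
  have eW : ∀ t ∈ Ioo 0 T, ∀ θ,
      W t θ = (ρ t θ) ^ 2 * (G2 t θ + ρ t θ - 2 * hRatio (ρ t)) := fun t ht θ => by
    have := (hpde t (sub ht) θ).hasDerivAt (Ico_mem_nhds ht.1 ht.2)
    rw [(tρ t ht θ).unique this, eG2 t (sub ht)]
    ring
  have pG1 : ∀ t ∈ Ico 0 T, ∀ θ, G1 t (θ + 2 * π) = G1 t θ := fun t ht θ => by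
    rw [← eG1 t ht, ← deriv_comp_add_const, funext (hper t ht)]
  have pG2 : ∀ t ∈ Ico 0 T, ∀ θ, G2 t (θ + 2 * π) = G2 t θ := fun t ht θ => by
    have e : deriv (G1 t) = G2 t := funext fun θ => (dG1 t ht θ).deriv
    rw [← e, ← deriv_comp_add_const, funext (pG1 t ht)]
  have slc : ∀ {F : ℝ → ℝ → ℝ}, ContinuousOn (Function.uncurry F) S → ∀ t ∈ Ico 0 T,
      Continuous (F t) := fun hF t ht => continuous_slice hF ht
  have hne : ∀ p ∈ S, Function.uncurry ρ p ≠ 0 := fun p h => (hp p.1 h.1 p.2).ne'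
  -- `v` is the time derivative of the radius of curvature `1 / ρ`.
  set v : ℝ → ℝ → ℝ := fun t θ => -W t θ / (ρ t θ) ^ 2 with hv
  have cv : ContinuousOn (Function.uncurry v) S :=
    ContinuousOn.div cW.neg (cρ.pow 2) (fun p h => pow_ne_zero 2 (hne p h))
  have ev : ∀ t ∈ Ioo 0 T, ∀ θ, v t θ = -(G2 t θ + ρ t θ - 2 * hRatio (ρ t)) := fun t ht θ => by
    have := (hp t (sub ht) θ).ne'
    simp only [hv, eW t ht]
    field_simp
  have tu : ∀ t ∈ Ioo 0 T, ∀ θ, HasDerivAt (fun s => 1 / ρ s θ) (v t θ) t := fun t ht θ => by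
    simpa only [one_div] using (tρ t ht θ).fun_inv (hp t (sub ht) θ).ne'
  have cu : ContinuousOn (Function.uncurry fun t θ => 1 / ρ t θ) S :=
    ContinuousOn.div continuousOn_const cρ hne
  have ccos : ContinuousOn (fun p : ℝ × ℝ => Real.cos p.2) S := by fun_prop
  have csin : ContinuousOn (fun p : ℝ × ℝ => Real.sin p.2) S := by fun_prop
  have cX : ContinuousOn (Function.uncurry fun t θ => Real.cos θ / ρ t θ) S := ccos.div cρ hne
  have cY : ContinuousOn (Function.uncurry fun t θ => Real.sin θ / ρ t θ) S := csin.div cρ hne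
  have cA : ContinuousOn (Function.uncurry fun t θ => Real.cos θ * v t θ) S := ccos.mul cv
  have cB : ContinuousOn (Function.uncurry fun t θ => Real.sin θ * v t θ) S := csin.mul cv
  have cp : ContinuousOn (Function.uncurry fun t θ =>
      (curveP (ρ t) θ).1 * Real.sin θ - (curveP (ρ t) θ).2 * Real.cos θ) S :=
    ((continuousOn_primitive_param cX).mul csin).sub ((continuousOn_primitive_param cY).mul ccos)
  have cq : ContinuousOn (Function.uncurry fun t θ =>
      (∫ β in (0:ℝ)..θ, Real.cos β * v t β) * Real.sin θ
        - (∫ β in (0:ℝ)..θ, Real.sin β * v t β) * Real.cos θ) S :=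
    ((continuousOn_primitive_param cA).mul csin).sub ((continuousOn_primitive_param cB).mul ccos)
  have c_area : ContinuousOn (Function.uncurry fun t θ =>
      ((curveP (ρ t) θ).1 * Real.sin θ - (curveP (ρ t) θ).2 * Real.cos θ) / ρ t θ) S :=
    cp.div cρ hne
  have lpos : ∀ t ∈ Ico 0 T, 0 < encArea (ρ t) := fun t ht =>
    encArea_pos (slc cρ t ht) (hp t ht) (hcl1 t ht) (hcl2 t ht)
  have d_perim : ∀ t ∈ Ioo 0 T, HasDerivAt (fun s => perim (ρ s))
      (-(∫ θ in (0:ℝ)..(2 * π), ρ t θ) + 4 * π * hRatio (ρ t)) t := fun t ht => by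
    have h := hasDerivAt_integral_param (a := 0) (b := 2 * π) ht (cu.mono subS) (cv.mono subS) tu
    refine h.congr_deriv ?_
    have i2 : (∫ θ in (0:ℝ)..(2 * π), G2 t θ) = 0 := by
      rw [intervalIntegral.integral_eq_sub_of_hasDerivAt (fun θ _ => dG1 t (sub ht) θ)
        ((slc cG2 t (sub ht)).intervalIntegrable _ _)]
      have := pG1 t (sub ht) 0
      rw [zero_add] at this
      rw [this, sub_self]
    have c1 := slc cρ t (sub ht)
    have c2 := slc cG2 t (sub ht)
    simp only [ev t ht]
    rw [intervalIntegral.integral_neg, intervalIntegral.integral_sub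
      (Continuous.intervalIntegrable (by fun_prop) _ _) (by simp), intervalIntegral.integral_add
      (c2.intervalIntegrable _ _) (c1.intervalIntegrable _ _), i2,
      intervalIntegral.integral_const]
    simp only [smul_eq_mul]
    ring
  have d_area : ∀ t ∈ Ioo 0 T, HasDerivAt (fun s => encArea (ρ s))
      (-2 * π + 2 * hRatio (ρ t) * perim (ρ t)) t := fun t ht => by
    have h := (hasDerivAt_integral_param (a := 0) (b := 2 * π) ht (c_area.mono subS)
      (F' := fun t θ => ((∫ β in (0:ℝ)..θ, Real.cos β * v t β) * Real.sin θ
        - (∫ β in (0:ℝ)..θ, Real.sin β * v t β) * Real.cos θ) / ρ t θ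
        + ((curveP (ρ t) θ).1 * Real.sin θ - (curveP (ρ t) θ).2 * Real.cos θ) * v t θ)
      (((cq.div cρ hne).add (cp.mul cv)).mono subS) (fun s hs θ => by
        have hX : HasDerivAt (fun s => (curveP (ρ s) θ).1)
            (∫ β in (0:ℝ)..θ, Real.cos β * v s β) s :=
          hasDerivAt_integral_param (a := 0) (b := θ) hs (cX.mono subS) (cA.mono subS)
            (fun s hs θ => by
              simpa only [mul_one_div] using (tu s hs θ).const_mul (Real.cos θ))
        have hY : HasDerivAt (fun s => (curveP (ρ s) θ).2)
            (∫ β in (0:ℝ)..θ, Real.sin β * v s β) s :=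
          hasDerivAt_integral_param (a := 0) (b := θ) hs (cY.mono subS) (cB.mono subS)
            (fun s hs θ => by
              simpa only [mul_one_div] using (tu s hs θ).const_mul (Real.sin θ))
        have := ((hX.mul_const (Real.sin θ)).fun_sub (hY.mul_const (Real.cos θ))).fun_mul
          (tu s hs θ)
        simpa only [mul_one_div] using this)).const_mul (1 / 2)
    refine h.congr_deriv ?_
    rw [area_variation (hp t (sub ht)) (dρ t (sub ht)) (dG1 t (sub ht)) (slc cG2 t (sub ht))
      (hcl1 t (sub ht)) (hcl2 t (sub ht)) (ev t ht)]
    ring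
  have d_h : ∀ t ∈ Ioo 0 T, ∃ h', h' ≤ 0 ∧ HasDerivAt (fun s => hRatio (ρ s)) h' t :=
    fun t ht => ⟨_, hRatio_deriv_ineq (slc cρ t (sub ht)) (hp t (sub ht)) (hcl1 t (sub ht))
      (hcl2 t (sub ht)), (d_perim t ht).div (d_area t ht) (lpos t (sub ht)).ne'⟩
  have c_h : ContinuousOn (fun s => hRatio (ρ s)) (Ico 0 T) :=
    (continuousOn_integral_param (2 * π) cu).div
      (continuousOn_const.mul (continuousOn_integral_param (2 * π) c_area))
      (fun t ht => (lpos t ht).ne')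
  have d_R : ∀ t ∈ Ioo 0 T, HasDerivAt (fun s => ∫ θ in (0:ℝ)..(2 * π), ρ s θ)
      (∫ θ in (0:ℝ)..(2 * π), W t θ) t := fun t ht =>
    hasDerivAt_integral_param ht (cρ.mono subS) (cW.mono subS) tρ
  have cE : ContinuousOn (Function.uncurry fun t θ => (ρ t θ) ^ 2 - (G1 t θ) ^ 2) S :=
    (cρ.pow 2).sub (cG1.pow 2)
  have d_E : ∀ t ∈ Ioo 0 T,
      HasDerivAt (fun s => ∫ θ in (0:ℝ)..(2 * π), ((ρ s θ) ^ 2 - (G1 s θ) ^ 2))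
      (∫ θ in (0:ℝ)..(2 * π), 2 * W t θ * (ρ t θ + G2 t θ)) t := fun t ht => by
    have h := hasDerivAt_integral_param (a := 0) (b := 2 * π) ht (cE.mono subS)
      (F' := fun t θ => 2 * (ρ t θ * W t θ) - 2 * (G1 t θ * M t θ))
      (((continuousOn_const (c := (2 : ℝ)).mul (cρ.mul cW)).sub
        (continuousOn_const (c := (2 : ℝ)).mul (cG1.mul cM))).mono subS) (fun s hs θ => by
        refine (((tρ s hs θ).pow 2).sub ((tG1 s hs θ).pow 2)).congr_deriv ?_
        push_cast
        ring)
    refine h.congr_deriv ?_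
    have c0 := slc cρ t (sub ht)
    have c1 := slc cG1 t (sub ht)
    have c2 := slc cG2 t (sub ht)
    have c3 := slc cW t (sub ht)
    have c4 := slc cM t (sub ht)
    -- Integration by parts, written as the vanishing integral of `∂_θ (ρ_θ ρ_t)`.
    have key : (∫ θ in (0:ℝ)..(2 * π), (G2 t θ * W t θ + G1 t θ * M t θ)) = 0 := by
      rw [intervalIntegral.integral_eq_sub_of_hasDerivAt (f := fun θ => G1 t θ * W t θ)
        (fun θ _ => (dG1 t (sub ht) θ).mul (dW t (sub ht) θ))
        (Continuous.intervalIntegrable (by fun_prop) _ _)]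
      have e1 := pG1 t (sub ht) 0
      have e2 := pG2 t (sub ht) 0
      have e3 := hper t (sub ht) 0
      rw [zero_add] at e1 e2 e3
      simp only [eW t ht, e1, e2, e3, sub_self]
    rw [← sub_eq_zero, ← intervalIntegral.integral_sub
      (Continuous.intervalIntegrable (by fun_prop) _ _)
      (Continuous.intervalIntegrable (by fun_prop) _ _)]
    refine Eq.trans ?_ ((congrArg (fun x => (-2 : ℝ) * x) key).trans (mul_zero _))
    rw [← intervalIntegral.integral_const_mul]
    refine intervalIntegral.integral_congr fun θ _ => ?_
    ring
  have eQ : EqOn (fun t => ∫ θ in (0:ℝ)..(2 * π),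
      ((ρ t θ) ^ 2 - (deriv (ρ t) θ) ^ 2 - 4 * hRatio (ρ t) * ρ t θ))
      (fun t => (∫ θ in (0:ℝ)..(2 * π), ((ρ t θ) ^ 2 - (G1 t θ) ^ 2))
        - 4 * hRatio (ρ t) * ∫ θ in (0:ℝ)..(2 * π), ρ t θ) (Ico 0 T) := fun t ht => by
    simp only [eG1 t ht]
    exact energy_eq (slc cρ t ht) (slc cG1 t ht) _
  refine MonotoneOn.congr ?_ eQ.symm
  have d_Q : ∀ t ∈ Ioo 0 T, ∃ Q', 0 ≤ Q' ∧
      HasDerivAt (fun t => (∫ θ in (0:ℝ)..(2 * π), ((ρ t θ) ^ 2 - (G1 t θ) ^ 2))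
        - 4 * hRatio (ρ t) * ∫ θ in (0:ℝ)..(2 * π), ρ t θ) Q' t := fun t ht => by
    obtain ⟨h', hh', hd⟩ := d_h t ht
    refine ⟨_, ?_, (d_E t ht).sub ((hd.const_mul 4).mul (d_R t ht))⟩
    have c0 := slc cρ t (sub ht)
    have c2 := slc cG2 t (sub ht)
    have c3 := slc cW t (sub ht)
    have hR : 0 ≤ ∫ θ in (0:ℝ)..(2 * π), ρ t θ :=
      intervalIntegral.integral_nonneg (by positivity) fun θ _ => (hp t (sub ht) θ).le
    -- The integrand of the difference equals `2 (ρ_t / ρ)²` by the flow equation.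
    have key : 0 ≤ (∫ θ in (0:ℝ)..(2 * π), 2 * W t θ * (ρ t θ + G2 t θ))
        - 4 * hRatio (ρ t) * ∫ θ in (0:ℝ)..(2 * π), W t θ := by
      rw [← intervalIntegral.integral_const_mul, ← intervalIntegral.integral_sub
        (Continuous.intervalIntegrable (by fun_prop) _ _)
        (Continuous.intervalIntegrable (by fun_prop) _ _)]
      refine intervalIntegral.integral_nonneg (by positivity) fun θ _ => ?_
      have e : 2 * W t θ * (ρ t θ + G2 t θ) - 4 * hRatio (ρ t) * W t θ
          = 2 * (ρ t θ * (G2 t θ + ρ t θ - 2 * hRatio (ρ t))) ^ 2 := by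
        rw [eW t ht]; ring
      rw [e]
      positivity
    have := mul_nonneg (neg_nonneg.2 hh') hR
    linarith
  refine monotoneOn_of_deriv_nonneg (convex_Ico 0 T) ?_ ?_ ?_
  · exact (continuousOn_integral_param (2 * π) cE).sub
      ((continuousOn_const.mul c_h).mul (continuousOn_integral_param (2 * π) cρ))
  · rw [interior_Ico]
    intro t ht
    obtain ⟨_, _, h⟩ := d_Q t ht
    exact h.differentiableAt.differentiableWithinAt
  · rw [interior_Ico]
    intro t ht
    obtain ⟨_, h0, h⟩ := d_Q t ht
    rwa [h.deriv]

/-- Along the renormalized curvature flow, the quantity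
`∫₀^{2π} (ρ² − (∂_θ ρ)² − 4 h_t ρ) dθ` is non-decreasing in `t`; consequently, with
`c₀ = −∫₀^{2π} (ρ(0)² − (∂_θ ρ(0))² − 4 h₀ ρ(0)) dθ`, one has
`∫ (∂_θ ρ)² ≤ ∫ ρ² − 4 h_t ∫ ρ + c₀` for all `t ∈ [0,T)`. -/
theorem stmt11 (T : ℝ) (hT : 0 < T) (ρ : ℝ → ℝ → ℝ) (hρ : IsRCFSolution T ρ) :
    MonotoneOn (fun t => ∫ θ in (0:ℝ)..(2 * π),
      ((ρ t θ) ^ 2 - (deriv (ρ t) θ) ^ 2 - 4 * hRatio (ρ t) * ρ t θ)) (Ico 0 T) ∧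
    ∀ t ∈ Ico (0:ℝ) T,
      (∫ θ in (0:ℝ)..(2 * π), (deriv (ρ t) θ) ^ 2)
        ≤ (∫ θ in (0:ℝ)..(2 * π), (ρ t θ) ^ 2)
            - 4 * hRatio (ρ t) * (∫ θ in (0:ℝ)..(2 * π), ρ t θ)
            + -(∫ θ in (0:ℝ)..(2 * π),
                ((ρ 0 θ) ^ 2 - (deriv (ρ 0) θ) ^ 2 - 4 * hRatio (ρ 0) * ρ 0 θ)) := by
  have hm := energy_monotone T ρ hρ
  refine ⟨hm, fun t ht => ?_⟩
  have h := hm ⟨le_rfl, hT⟩ ht ht.1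
  have hc : Continuous (ρ t) := continuous_slice hρ.1.continuousOn ht
  have hd : Continuous (deriv (ρ t)) := by
    have e : deriv (ρ t) = fun θ =>
        fderivWithin ℝ (Function.uncurry ρ) (Ico 0 T ×ˢ univ) (t, θ) (0, 1) :=
      funext fun θ => (hasDerivAt_angle (θ := θ) hρ.1 ht).deriv
    rw [e]
    exact continuous_slice (F := fun t θ =>
      fderivWithin ℝ (Function.uncurry ρ) (Ico 0 T ×ˢ univ) (t, θ) (0, 1))
      (contDiffOn_partial (0, 1) hρ.1).continuousOn ht
  simp only at h
  rw [energy_eq hc hd, intervalIntegral.integral_sub (f := fun θ => ρ t θ ^ 2)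
    (Continuous.intervalIntegrable (by fun_prop) _ _)
    (Continuous.intervalIntegrable (by fun_prop) _ _)] at h
  linarith
end

section
/- Let T < ∞ and let ρ : [0,T) × ℝ → (0,∞) be a smooth solution of the renormalized curvature flow PDE ∂_t ρ = ρ² ∂²_θ ρ + ρ²(ρ − 2h_t), 2π-periodic in θ and satisfying the closure conditions for every t. Then the curvature is uniformly bounded: sup { ρ(t,θ) : θ ∈ ℝ, t ∈ [0,T) } < ∞. -/
/-!
The bound is Tso's estimate, which compares the curvature `ρ` with the support function `u` of the
curve and therefore needs `u` to be pinched between two positive constants.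

**Support function.** Take the origin at the Steiner point. Then `u` is the convolution `supp` of
the radius of curvature `1/ρ` with the kernel `(π - φ) sin φ / (2π)`, which is nonnegative on
`[0, 2π]` and is the Green's function of `u'' + u` modulo the first Fourier modes. Hence
`u'' + u = 1/ρ` by the closure conditions (`supp_hasDerivAt_two`). Since the flow reads
`∂ₜ(1/ρ) = f'' + f` with `f = 2h - ρ`, the same kernel gives `∂ₜu = 2h - ρ + p`, where `p` is the
first Fourier mode of `ρ` (`FlowData.suppt`). The area is `½ ∫ u/ρ` (`encArea_eq`).

**Area.** It follows that `λ' = 2hσ - 2π`. The kernel is at most `1/2`, so `u ≤ σ/2` and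
`4λ ≤ σ²`; thus `hσ = σ²/λ ≥ 4`, and the area increases (`FlowData.area_mono`). In particular `λ`,
and with it `σ`, stays bounded below.

**Radius of curvature.** At a spatial maximum of `1/ρ` one has `∂ₜ(1/ρ) < 2h = 2σ/λ`, and `σ` is
at most `2π` times that maximum. By the maximum principle `1/ρ` grows at most exponentially, so
`1/ρ ≤ K` on the finite time interval (`FlowData.exists_inv_bound`). As the mass `σ` of `1/ρ` is
bounded below while its density is at most `K`, it cannot concentrate near the zeros of the kernel,
and therefore `2c ≤ u ≤ πK` for some `c > 0` (`exists_supp_lower`, `supp_le`).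

**Curvature.** At a first new maximum `Q` of `ρ / (u - c)`, the derivative conditions give
`c ρ² ≤ 2ρ - p`. There `ρ` is comparable to `Q`, while `|p| ≤ 4 max ρ ≤ 4πKQ`, so the quadratic
term bounds `Q` (`FlowData.exists_bound`). This argument runs on `[T/2, T)`, where two-sided time
derivatives are available; on `[0, T/2]` compactness suffices.
-/

open Real Set Filter MeasureTheory Topology NNReal

/-! ### Calculus lemmas -/

/-- Second-order necessary condition at a global maximum. -/
lemma second_deriv_nonpos_of_max {g g1 : ℝ → ℝ} {g2 x : ℝ}
    (h1 : ∀ y, HasDerivAt g (g1 y) y) (h2 : HasDerivAt g1 g2 x) (hmax : ∀ y, g y ≤ g x) :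
    g2 ≤ 0 := by
  by_contra! hpos
  have hd : deriv g = g1 := funext fun y => (h1 y).deriv
  have hx : IsLocalMax g x := Eventually.of_forall hmax
  -- were `g2` positive, `x` would also be a local minimum, so `g` would be locally constant
  have hmin : IsLocalMin g x := isLocalMin_of_deriv_deriv_pos (by rw [hd, h2.deriv]; exact hpos)
    hx.deriv_eq_zero (h1 x).continuousAt
  have hconst : g =ᶠ[𝓝 x] fun _ => g x := by
    filter_upwards [hmin] with y hy using le_antisymm (hmax y) hy
  have h0 : deriv g =ᶠ[𝓝 x] deriv (fun _ => g x) := hconst.deriv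
  have h00 : deriv (deriv g) x = 0 := by
    rw [h0.deriv_eq]; simp
  rw [hd, h2.deriv] at h00
  linarith

/-- If `g` attains at `t` its maximum over `[a, t]`, then `g'(t) ≥ 0`. -/
lemma deriv_nonneg_of_left_max {g : ℝ → ℝ} {g' a t : ℝ} (hat : a < t) (h : HasDerivAt g g' t)
    (hmax : ∀ s ∈ Icc a t, g s ≤ g t) : 0 ≤ g' := by
  have h1 : Tendsto (slope g t) (𝓝[<] t) (𝓝 g') :=
    h.tendsto_slope.mono_left (nhdsWithin_mono _ fun y hy => ne_of_lt hy)
  refine ge_of_tendsto h1 ?_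
  have : Ioo a t ∈ 𝓝[<] t := Ioo_mem_nhdsLT hat
  filter_upwards [this] with s hs
  rw [slope_def_field]
  exact div_nonneg_of_nonpos (by linarith [hmax s ⟨hs.1.le, hs.2.le⟩]) (by linarith [hs.2])

lemma continuousOn_integral_param_s12 {X : Type*} [TopologicalSpace X] [FirstCountableTopology X]
    [LocallyCompactSpace X] {s : Set X} (hs : IsOpen s) {f : X → ℝ → ℝ}
    (hf : ContinuousOn (Function.uncurry f) (s ×ˢ univ)) (a b : ℝ) :
    ContinuousOn (fun x => ∫ φ in a..b, f x φ) s := by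
  have : LocallyCompactSpace s := hs.locallyCompactSpace
  rw [continuousOn_iff_continuous_domRestrict]
  refine intervalIntegral.continuous_parametric_intervalIntegral_of_continuous'
    (f := fun (x : s) φ => f x φ) ?_ a b
  exact hf.comp_continuous (f := fun p : s × ℝ => ((p.1 : X), p.2)) (by fun_prop)
    (fun p => ⟨p.1.2, mem_univ _⟩)

lemma section_continuous {X : Type*} [TopologicalSpace X] {s : Set X} {f : X → ℝ → ℝ}
    (hf : ContinuousOn (Function.uncurry f) (s ×ˢ univ)) {x : X} (hx : x ∈ s) :
    Continuous (f x) :=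
  hf.comp_continuous (f := fun φ : ℝ => (x, φ)) (by fun_prop) (fun _ => ⟨hx, mem_univ _⟩)

/-- Differentiation under the integral sign, for a jointly continuous derivative. -/
lemma hasDerivAt_integral_param_s12 {s : Set ℝ} (hs : IsOpen s) {f f' : ℝ → ℝ → ℝ}
    (hf : ContinuousOn (Function.uncurry f) (s ×ˢ univ))
    (hf' : ContinuousOn (Function.uncurry f') (s ×ˢ univ))
    (hd : ∀ x ∈ s, ∀ φ, HasDerivAt (fun y => f y φ) (f' x φ) x) (a b : ℝ) {x : ℝ} (hx : x ∈ s) :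
    HasDerivAt (fun x => ∫ φ in a..b, f x φ) (∫ φ in a..b, f' x φ) x := by
  obtain ⟨ε, hε, hball⟩ := Metric.nhds_basis_closedBall.mem_iff.1 (hs.mem_nhds hx)
  have hcpt : IsCompact (Metric.closedBall x ε ×ˢ uIcc a b) :=
    (isCompact_closedBall x ε).prod isCompact_uIcc
  obtain ⟨C, hC⟩ := hcpt.exists_bound_of_continuousOn
    (hf'.mono (prod_mono hball (subset_univ _)))
  refine (intervalIntegral.hasDerivAt_integral_of_dominated_loc_of_deriv_le
    (bound := fun _ => C) (F := f) (F' := f') (Metric.closedBall_mem_nhds x hε) ?_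
    ((section_continuous hf hx).intervalIntegrable _ _)
    (section_continuous hf' hx).aestronglyMeasurable ?_ (by simp) ?_).2
  · filter_upwards [hs.mem_nhds hx] with y hy
    exact (section_continuous hf hy).aestronglyMeasurable
  · refine Eventually.of_forall fun φ hφ y hy => ?_
    exact hC (y, φ) ⟨hy, uIoc_subset_uIcc hφ⟩
  · exact Eventually.of_forall fun φ _ y hy => hd y (hball hy) φ

/-- A parabolic maximum principle: a function on `[a, b) × S¹` that is at most `M` at time `a` and
has no space-time maximum exceeding `M` at a later time stays at most `M`. -/
lemma max_principle {F : ℝ → ℝ → ℝ} {a b M : ℝ}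
    (hF : ContinuousOn (Function.uncurry F) (Ico a b ×ˢ univ))
    (hper : ∀ t ∈ Ico a b, Function.Periodic (F t) (2 * π))
    (h0 : ∀ θ, F a θ ≤ M)
    (hstep : ∀ t ∈ Ioo a b, ∀ θ, M < F t θ →
      (∀ s ∈ Icc a t, ∀ φ, F s φ ≤ F t θ) → False) :
    ∀ t ∈ Ico a b, ∀ θ, F t θ ≤ M := by
  intro t ht θ
  by_contra! hlt
  have hsub : Icc a t ⊆ Ico a b := fun s hs => ⟨hs.1, hs.2.trans_lt ht.2⟩
  have hcpt : IsCompact (Icc a t ×ˢ Icc 0 (2 * π)) := isCompact_Icc.prod isCompact_Icc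
  have hpi := Real.two_pi_pos
  obtain ⟨⟨s, φ⟩, ⟨hs, -⟩, hmax⟩ := hcpt.exists_isMaxOn
    ⟨(a, 0), ⟨left_mem_Icc.2 ht.1, left_mem_Icc.2 hpi.le⟩⟩
    (hF.mono (prod_mono hsub (subset_univ _)))
  have hall : ∀ r ∈ Icc a t, ∀ ψ, F r ψ ≤ F s φ := by
    intro r hr ψ
    obtain ⟨ψ', hψ', he⟩ := (hper r (hsub hr)).exists_mem_Ico₀ hpi ψ
    rw [he]
    exact hmax (a := (r, ψ')) ⟨hr, Ico_subset_Icc_self hψ'⟩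
  have hsM : M < F s φ := hlt.trans_le (hall t (right_mem_Icc.2 ht.1) θ)
  have has : a < s := by
    rcases hs.1.eq_or_lt with h | h
    · subst h; exact absurd (h0 φ) (not_le.2 hsM)
    · exact h
  exact hstep s ⟨has, (hsub hs).2⟩ φ hsM fun r hr ψ => hall r ⟨hr.1, hr.2.trans hs.2⟩ ψ

/-! ### Smooth functions on a time strip -/

lemma hasDerivAt_time_s12 {J : Set ℝ} (hJ : IsOpen J) {F : ℝ → ℝ → ℝ}
    (hF : ContDiffOn ℝ (⊤ : ℕ∞) (Function.uncurry F) (J ×ˢ univ)) {t : ℝ} (ht : t ∈ J) (θ : ℝ) :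
    HasDerivAt (fun s => F s θ) (fderiv ℝ (Function.uncurry F) (t, θ) (1, 0)) t := by
  have h1 := ((hF.contDiffAt ((hJ.prod isOpen_univ).mem_nhds
    (⟨ht, mem_univ θ⟩ : (t, θ) ∈ J ×ˢ univ))).differentiableAt (by simp)).hasFDerivAt
  have h2 : HasDerivAt (fun s : ℝ => (s, θ)) ((1 : ℝ), (0 : ℝ)) t :=
    (hasDerivAt_id t).prodMk (hasDerivAt_const t θ)
  exact h1.comp_hasDerivAt t h2

lemma hasDerivAt_space {J : Set ℝ} (hJ : IsOpen J) {F : ℝ → ℝ → ℝ}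
    (hF : ContDiffOn ℝ (⊤ : ℕ∞) (Function.uncurry F) (J ×ˢ univ)) {t : ℝ} (ht : t ∈ J) (θ : ℝ) :
    HasDerivAt (F t) (fderiv ℝ (Function.uncurry F) (t, θ) (0, 1)) θ := by
  have h1 := ((hF.contDiffAt ((hJ.prod isOpen_univ).mem_nhds
    (⟨ht, mem_univ θ⟩ : (t, θ) ∈ J ×ˢ univ))).differentiableAt (by simp)).hasFDerivAt
  have h2 : HasDerivAt (fun s : ℝ => (t, s)) ((0 : ℝ), (1 : ℝ)) θ :=
    (hasDerivAt_const θ t).prodMk (hasDerivAt_id θ)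
  exact h1.comp_hasDerivAt θ h2

lemma contDiffOn_fderiv_apply {J : Set ℝ} (hJ : IsOpen J) {F : ℝ → ℝ → ℝ}
    (hF : ContDiffOn ℝ (⊤ : ℕ∞) (Function.uncurry F) (J ×ˢ univ)) (w : ℝ × ℝ) :
    ContDiffOn ℝ (⊤ : ℕ∞) (Function.uncurry fun t θ => fderiv ℝ (Function.uncurry F) (t, θ) w)
      (J ×ˢ univ) := by
  have h := hF.fderiv_of_isOpen (m := (⊤ : ℕ∞)) (hJ.prod isOpen_univ) (by simp)
  exact h.clm_apply contDiffOn_const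
/-! ### The support function based at the Steiner point -/

/-- Up to first Fourier modes, the Green's function of `u ↦ u'' + u` on the circle, for
`φ ∈ [0, 2π]`. This normalization is nonnegative. -/
noncomputable def kern (φ : ℝ) : ℝ := (π - φ) * Real.sin φ / (2 * π)

/-- The support function, with origin at the Steiner point, of the curve with radius of
curvature `w`, as a function of the tangent angle. -/
noncomputable def supp (w : ℝ → ℝ) (θ : ℝ) : ℝ := ∫ φ in (0:ℝ)..(2 * π), kern φ * w (θ + φ)

/-- The first Fourier mode of `f`. -/
noncomputable def firstMode (f : ℝ → ℝ) (θ : ℝ) : ℝ :=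
  (Real.cos θ * (∫ β in (0:ℝ)..(2 * π), Real.cos β * f β)
    + Real.sin θ * (∫ β in (0:ℝ)..(2 * π), Real.sin β * f β)) / π

lemma kern_continuous : Continuous kern := by
  unfold kern; fun_prop

lemma kern_symm (φ : ℝ) : kern (2 * π - φ) = kern φ := by
  unfold kern; rw [Real.sin_two_pi_sub]; ring

lemma kern_nonneg {φ : ℝ} (h : φ ∈ Icc 0 (2 * π)) : 0 ≤ kern φ := by
  have key : ∀ ψ, 0 ≤ ψ → ψ ≤ π → 0 ≤ kern ψ := fun ψ h0 h1 =>
    div_nonneg (mul_nonneg (by linarith) (Real.sin_nonneg_of_nonneg_of_le_pi h0 h1)) two_pi_pos.le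
  rcases le_total φ π with h1 | h1
  · exact key φ h.1 h1
  · rw [← kern_symm]; exact key _ (by linarith [h.2]) (by linarith)

lemma kern_le {φ : ℝ} (h : φ ∈ Icc 0 (2 * π)) : kern φ ≤ 1 / 2 := by
  have key : ∀ ψ, 0 ≤ ψ → ψ ≤ π → kern ψ ≤ 1 / 2 := fun ψ h0 h1 => by
    unfold kern
    rw [div_le_iff₀ two_pi_pos]
    nlinarith [Real.sin_le_one ψ, Real.sin_nonneg_of_nonneg_of_le_pi h0 h1]
  rcases le_total φ π with h1 | h1
  · exact key φ h.1 h1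
  · rw [← kern_symm]; exact key _ (by linarith [h.2]) (by linarith)

lemma kern_ge {δ φ : ℝ} (hδ : 0 ≤ δ) (h1 : δ ≤ φ) (h2 : φ ≤ π - δ) :
    δ * Real.sin δ / (2 * π) ≤ kern φ := by
  have hs : Real.sin δ ≤ Real.sin φ := by
    have e := Real.sin_sub_sin φ δ
    have a := Real.sin_nonneg_of_nonneg_of_le_pi (x := (φ - δ) / 2) (by linarith)
      (by linarith [Real.pi_pos])
    have b := Real.cos_nonneg_of_neg_pi_div_two_le_of_le (x := (φ + δ) / 2)
      (by linarith [Real.pi_pos]) (by linarith)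
    nlinarith [mul_nonneg a b]
  have hs0 := Real.sin_nonneg_of_nonneg_of_le_pi hδ (by linarith)
  unfold kern
  gcongr
  all_goals linarith

lemma kern_ge' {δ φ : ℝ} (hδ : 0 ≤ δ) (h1 : π + δ ≤ φ) (h2 : φ ≤ 2 * π - δ) :
    δ * Real.sin δ / (2 * π) ≤ kern φ := by
  rw [← kern_symm]; exact kern_ge hδ (by linarith) (by linarith)

lemma integral_shift {w : ℝ → ℝ} (hper : Function.Periodic w (2 * π)) (θ : ℝ) :
    ∫ φ in (0:ℝ)..(2 * π), w (θ + φ) = ∫ φ in (0:ℝ)..(2 * π), w φ := by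
  rw [intervalIntegral.integral_comp_add_left, add_zero]
  simpa using hper.intervalIntegral_add_eq θ 0

lemma supp_nonneg {w : ℝ → ℝ} (h0 : ∀ θ, 0 ≤ w θ) (θ : ℝ) : 0 ≤ supp w θ :=
  intervalIntegral.integral_nonneg two_pi_pos.le fun _ hφ => mul_nonneg (kern_nonneg hφ) (h0 _)

lemma supp_le {w : ℝ → ℝ} (hw : Continuous w) (hper : Function.Periodic w (2 * π))
    (h0 : ∀ θ, 0 ≤ w θ) (θ : ℝ) : supp w θ ≤ (1 / 2) * ∫ φ in (0:ℝ)..(2 * π), w φ := by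
  rw [← integral_shift hper θ, ← intervalIntegral.integral_const_mul]
  have := kern_continuous
  exact intervalIntegral.integral_mono_on two_pi_pos.le
    (Continuous.intervalIntegrable (by fun_prop) _ _)
    (Continuous.intervalIntegrable (by fun_prop) _ _)
    fun φ hφ => mul_le_mul_of_nonneg_right (kern_le hφ) (h0 _)

/-- The Steiner point stays away from the curve: the kernel is bounded below off four intervals
of length `δ`, which carry at most `4δK` of the total mass of `w`. -/
lemma supp_ge {w : ℝ → ℝ} {K δ : ℝ} (hw : Continuous w) (hper : Function.Periodic w (2 * π))
    (h0 : ∀ θ, 0 ≤ w θ) (hK : ∀ θ, w θ ≤ K) (hδ : 0 ≤ δ) (hδ1 : 2 * δ ≤ π) (θ : ℝ) :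
    δ * Real.sin δ / (2 * π) * ((∫ φ in (0:ℝ)..(2 * π), w φ) - 4 * δ * K) ≤ supp w θ := by
  set η := δ * Real.sin δ / (2 * π) with hη
  have hη0 : 0 ≤ η := div_nonneg (mul_nonneg hδ (Real.sin_nonneg_of_nonneg_of_le_pi hδ
    (by linarith))) two_pi_pos.le
  have hk := kern_continuous
  set D : ℝ → ℝ := fun φ => kern φ * w (θ + φ) - η * w (θ + φ) with hD
  have hDc : Continuous D := by fun_prop
  have hi : ∀ a b, IntervalIntegrable D volume a b := fun a b => hDc.intervalIntegrable a b
  have good : ∀ a b, a ≤ b → (∀ φ ∈ Icc a b, η ≤ kern φ) → 0 ≤ ∫ φ in a..b, D φ := by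
    intro a b hab h
    refine intervalIntegral.integral_nonneg hab fun φ hφ => ?_
    have := mul_le_mul_of_nonneg_right (h φ hφ) (h0 (θ + φ))
    simp only [hD]; linarith
  have bad : ∀ a b, a ≤ b → 0 ≤ a → b ≤ 2 * π → -(η * K) * (b - a) ≤ ∫ φ in a..b, D φ := by
    intro a b hab ha hb
    have : ∫ φ in a..b, -(η * K) ≤ ∫ φ in a..b, D φ := by
      refine intervalIntegral.integral_mono_on hab (by simp) (hi a b) fun φ hφ => ?_
      have h1 := mul_nonneg (kern_nonneg ⟨ha.trans hφ.1, hφ.2.trans hb⟩) (h0 (θ + φ))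
      have h2 := mul_le_mul_of_nonneg_left (hK (θ + φ)) hη0
      simp only [hD]; linarith
    rw [intervalIntegral.integral_const, smul_eq_mul] at this
    linarith
  have hpi := Real.pi_pos
  have e : ∫ φ in (0:ℝ)..(2 * π), D φ = (∫ φ in (0:ℝ)..δ, D φ) + (∫ φ in δ..(π - δ), D φ)
      + (∫ φ in (π - δ)..(π + δ), D φ) + (∫ φ in (π + δ)..(2 * π - δ), D φ)
      + (∫ φ in (2 * π - δ)..(2 * π), D φ) := by
    rw [intervalIntegral.integral_add_adjacent_intervals (hi _ _) (hi _ _),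
      intervalIntegral.integral_add_adjacent_intervals (hi _ _) (hi _ _),
      intervalIntegral.integral_add_adjacent_intervals (hi _ _) (hi _ _),
      intervalIntegral.integral_add_adjacent_intervals (hi _ _) (hi _ _)]
  have b1 := bad 0 δ hδ le_rfl (by linarith)
  have b2 := bad (π - δ) (π + δ) (by linarith) (by linarith) (by linarith)
  have b3 := bad (2 * π - δ) (2 * π) (by linarith) (by linarith) le_rfl
  have g1 := good δ (π - δ) (by linarith) fun φ hφ => kern_ge hδ hφ.1 hφ.2
  have g2 := good (π + δ) (2 * π - δ) (by linarith) fun φ hφ => kern_ge' hδ hφ.1 hφ.2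
  have e2 : ∫ φ in (0:ℝ)..(2 * π), D φ = supp w θ - η * ∫ φ in (0:ℝ)..(2 * π), w φ := by
    rw [← integral_shift hper θ, ← intervalIntegral.integral_const_mul]
    exact intervalIntegral.integral_sub (Continuous.intervalIntegrable (by fun_prop) _ _)
      (Continuous.intervalIntegrable (by fun_prop) _ _)
  linarith

/-- Green's identity for the kernel: `supp` inverts `f ↦ f'' + f` modulo first Fourier modes. -/
lemma supp_green {f f1 f2 : ℝ → ℝ} (hf : ∀ θ, HasDerivAt f (f1 θ) θ)
    (hf1 : ∀ θ, HasDerivAt f1 (f2 θ) θ) (hf2 : Continuous f2)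
    (hper : Function.Periodic f (2 * π)) (θ : ℝ) :
    supp (fun x => f2 x + f x) θ = f θ - firstMode f θ := by
  have hpi := Real.pi_pos
  have hfc : Continuous f := continuous_iff_continuousAt.2 fun x => (hf x).continuousAt
  have hk := kern_continuous
  let k1 : ℝ → ℝ := fun φ => (-Real.sin φ + (π - φ) * Real.cos φ) / (2 * π)
  have hk1 : ∀ φ, HasDerivAt kern (k1 φ) φ := by
    intro φ
    have := ((((hasDerivAt_id φ).const_sub π).mul (Real.hasDerivAt_sin φ)).div_const (2 * π))
    refine this.congr_deriv ?_
    simp [k1]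
  have hk2 : ∀ φ, HasDerivAt k1 (-kern φ - Real.cos φ / π) φ := by
    intro φ
    have := (((Real.hasDerivAt_sin φ).neg.add
      (((hasDerivAt_id φ).const_sub π).mul (Real.hasDerivAt_cos φ))).div_const (2 * π))
    refine this.congr_deriv ?_
    simp only [kern, id]; field_simp; ring
  have hsh : ∀ φ, HasDerivAt (fun φ => f (θ + φ)) (f1 (θ + φ)) φ := fun φ => by
    simpa using (hf (θ + φ)).comp_const_add θ φ
  have hsh1 : ∀ φ, HasDerivAt (fun φ => f1 (θ + φ)) (f2 (θ + φ)) φ := fun φ => by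
    simpa using (hf1 (θ + φ)).comp_const_add θ φ
  have hP : ∀ φ ∈ uIcc 0 (2 * π),
      HasDerivAt (fun φ => kern φ * f1 (θ + φ) - k1 φ * f (θ + φ))
        (kern φ * (f2 (θ + φ) + f (θ + φ)) + Real.cos φ / π * f (θ + φ)) φ := by
    intro φ _
    refine (((hk1 φ).mul (hsh1 φ)).sub ((hk2 φ).mul (hsh φ))).congr_deriv ?_
    ring
  have hint := intervalIntegral.integral_eq_sub_of_hasDerivAt hP
    (Continuous.intervalIntegrable (by fun_prop) _ _)
  rw [intervalIntegral.integral_add (Continuous.intervalIntegrable (by fun_prop) _ _)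
    (Continuous.intervalIntegrable (by fun_prop) _ _)] at hint
  have hend : f (θ + 2 * π) = f θ := hper θ
  have hbd : (kern (2 * π) * f1 (θ + 2 * π) - k1 (2 * π) * f (θ + 2 * π)
      - (kern 0 * f1 (θ + 0) - k1 0 * f (θ + 0))) = f θ := by
    rw [hend]; simp only [kern, k1, Real.sin_two_pi, Real.cos_two_pi, Real.sin_zero,
      Real.cos_zero, add_zero]; field_simp; ring
  have hmode : ∫ φ in (0:ℝ)..(2 * π), Real.cos φ / π * f (θ + φ) = firstMode f θ := by
    have hp : Function.Periodic (fun β => Real.cos (β - θ) / π * f β) (2 * π) := by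
      intro β
      simp only [hper β, show β + 2 * π - θ = (β - θ) + 2 * π by ring, Real.cos_add_two_pi]
    have := integral_shift hp θ
    simp only [add_sub_cancel_left] at this
    rw [this, firstMode, ← intervalIntegral.integral_const_mul,
      ← intervalIntegral.integral_const_mul, ← intervalIntegral.integral_add
      (Continuous.intervalIntegrable (by fun_prop) _ _)
      (Continuous.intervalIntegrable (by fun_prop) _ _), ← intervalIntegral.integral_div]
    refine intervalIntegral.integral_congr fun β _ => ?_
    simp only [Real.cos_sub]; ring
  rw [hbd, hmode] at hint
  unfold supp
  linarith

lemma supp_hasDerivAt {w w1 : ℝ → ℝ} (hw : ∀ θ, HasDerivAt w (w1 θ) θ) (hw1 : Continuous w1)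
    (θ : ℝ) : HasDerivAt (supp w) (supp w1 θ) θ := by
  have hwc : Continuous w := continuous_iff_continuousAt.2 fun x => (hw x).continuousAt
  have hk := kern_continuous
  refine hasDerivAt_integral_param_s12 (s := univ) isOpen_univ
    (f := fun θ φ => kern φ * w (θ + φ)) (f' := fun θ φ => kern φ * w1 (θ + φ)) ?_ ?_ ?_ _ _
    (mem_univ θ)
  · exact Continuous.continuousOn (by simp only [Function.uncurry_def]; fun_prop)
  · exact Continuous.continuousOn (by simp only [Function.uncurry_def]; fun_prop)
  · intro x _ φ
    simpa using ((hw (x + φ)).comp_add_const x φ).const_mul (kern φ)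

lemma supp_periodic {w : ℝ → ℝ} (hper : Function.Periodic w (2 * π)) :
    Function.Periodic (supp w) (2 * π) := by
  intro θ
  unfold supp
  refine intervalIntegral.integral_congr fun φ _ => ?_
  simp only [show θ + 2 * π + φ = (θ + φ) + 2 * π by ring, hper (θ + φ)]

/-- The support function solves `u'' + u = w` when the curve closes up. -/
lemma supp_hasDerivAt_two {w w1 w2 : ℝ → ℝ} (hw : ∀ θ, HasDerivAt w (w1 θ) θ)
    (hw1 : ∀ θ, HasDerivAt w1 (w2 θ) θ) (hw2 : Continuous w2)
    (hper : Function.Periodic w (2 * π))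
    (hc : ∫ β in (0:ℝ)..(2 * π), Real.cos β * w β = 0)
    (hs : ∫ β in (0:ℝ)..(2 * π), Real.sin β * w β = 0) (θ : ℝ) :
    HasDerivAt (supp w1) (w θ - supp w θ) θ := by
  have hwc : Continuous w := continuous_iff_continuousAt.2 fun x => (hw x).continuousAt
  have hk := kern_continuous
  refine (supp_hasDerivAt hw1 hw2 θ).congr_deriv ?_
  have h1 := supp_green hw hw1 hw2 hper θ
  have h2 : supp (fun x => w2 x + w x) θ = supp w2 θ + supp w θ := by
    unfold supp
    rw [← intervalIntegral.integral_add (Continuous.intervalIntegrable (by fun_prop) _ _)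
      (Continuous.intervalIntegrable (by fun_prop) _ _)]
    exact intervalIntegral.integral_congr fun φ _ => by ring
  have h3 : firstMode w θ = 0 := by simp [firstMode, hc, hs]
  linarith

/-- Self-adjointness of `u ↦ u'' + u` under vanishing boundary terms. -/
lemma green_identity {u u1 u2 f f1 f2 : ℝ → ℝ} {a b : ℝ} (hu : ∀ θ, HasDerivAt u (u1 θ) θ)
    (hu1 : ∀ θ, HasDerivAt u1 (u2 θ) θ) (hu2 : Continuous u2)
    (hf : ∀ θ, HasDerivAt f (f1 θ) θ) (hf1 : ∀ θ, HasDerivAt f1 (f2 θ) θ) (hf2 : Continuous f2)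
    (hbd : u b * f1 b - u1 b * f b = u a * f1 a - u1 a * f a) :
    ∫ θ in a..b, u θ * (f2 θ + f θ) = ∫ θ in a..b, (u2 θ + u θ) * f θ := by
  have huc : Continuous u := continuous_iff_continuousAt.2 fun x => (hu x).continuousAt
  have hfc : Continuous f := continuous_iff_continuousAt.2 fun x => (hf x).continuousAt
  rw [← sub_eq_zero, ← intervalIntegral.integral_sub
    (Continuous.intervalIntegrable (by fun_prop) _ _)
    (Continuous.intervalIntegrable (by fun_prop) _ _)]
  have hP : ∀ θ ∈ uIcc a b, HasDerivAt (fun θ => u θ * f1 θ - u1 θ * f θ)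
      (u θ * (f2 θ + f θ) - (u2 θ + u θ) * f θ) θ := by
    intro θ _
    refine (((hu θ).mul (hf1 θ)).sub ((hu1 θ).mul (hf θ))).congr_deriv ?_
    ring
  rw [intervalIntegral.integral_eq_sub_of_hasDerivAt hP
    (Continuous.intervalIntegrable (by fun_prop) _ _), hbd, sub_self]

/-- The enclosed area does not depend on the origin of the support function `u`. -/
lemma encArea_eq {r u u1 : ℝ → ℝ} (hr : Continuous r) (hr0 : ∀ θ, r θ ≠ 0)
    (hc : ∫ β in (0:ℝ)..(2 * π), Real.cos β / r β = 0)
    (hs : ∫ β in (0:ℝ)..(2 * π), Real.sin β / r β = 0)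
    (hu : ∀ θ, HasDerivAt u (u1 θ) θ) (hu1 : ∀ θ, HasDerivAt u1 ((r θ)⁻¹ - u θ) θ) :
    encArea r = (1 / 2) * ∫ θ in (0:ℝ)..(2 * π), u θ * (r θ)⁻¹ := by
  have huc : Continuous u := continuous_iff_continuousAt.2 fun x => (hu x).continuousAt
  have hri : Continuous fun θ => (r θ)⁻¹ := hr.inv₀ hr0
  have cc : Continuous fun β => Real.cos β / r β := Real.continuous_cos.div hr hr0
  have cs : Continuous fun β => Real.sin β / r β := Real.continuous_sin.div hr hr0
  let A : ℝ → ℝ := fun θ => ∫ β in (0:ℝ)..θ, Real.cos β / r β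
  let B : ℝ → ℝ := fun θ => ∫ β in (0:ℝ)..θ, Real.sin β / r β
  have hA : ∀ θ, HasDerivAt A (Real.cos θ / r θ) θ := fun θ => cc.integral_hasStrictDerivAt 0 θ
    |>.hasDerivAt
  have hB : ∀ θ, HasDerivAt B (Real.sin θ / r θ) θ := fun θ => cs.integral_hasStrictDerivAt 0 θ
    |>.hasDerivAt
  let S : ℝ → ℝ := fun θ => A θ * Real.sin θ - B θ * Real.cos θ
  let S1 : ℝ → ℝ := fun θ => A θ * Real.cos θ + B θ * Real.sin θ
  have hS : ∀ θ, HasDerivAt S (S1 θ) θ := by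
    intro θ
    refine (((hA θ).mul (Real.hasDerivAt_sin θ)).sub
      ((hB θ).mul (Real.hasDerivAt_cos θ))).congr_deriv ?_
    simp only [S1]; ring
  have hS1 : ∀ θ, HasDerivAt S1 ((r θ)⁻¹ - S θ) θ := by
    intro θ
    refine (((hA θ).mul (Real.hasDerivAt_cos θ)).add
      ((hB θ).mul (Real.hasDerivAt_sin θ))).congr_deriv ?_
    have := Real.sin_sq_add_cos_sq θ
    have h0 := hr0 θ
    simp only [S]; field_simp; linear_combination this
  have hSc : Continuous S := continuous_iff_continuousAt.2 fun x => (hS x).continuousAt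
  have hA0 : A 0 = 0 := intervalIntegral.integral_same
  have hB0 : B 0 = 0 := intervalIntegral.integral_same
  have hA2 : A (2 * π) = 0 := hc
  have hB2 : B (2 * π) = 0 := hs
  have key := green_identity (a := 0) (b := 2 * π) hu hu1 (by fun_prop) hS hS1 (by fun_prop)
    (by simp [S, S1, hA0, hB0, hA2, hB2])
  simp only [sub_add_cancel] at key
  rw [key, encArea]
  congr 1
  refine intervalIntegral.integral_congr fun θ _ => ?_
  simp only [curveP, S, A, B]; ring

lemma exists_bound_of_periodic {w : ℝ → ℝ} (hw : Continuous w)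
    (hper : Function.Periodic w (2 * π)) : ∃ K, 0 < K ∧ ∀ θ, w θ ≤ K := by
  obtain ⟨C, hC⟩ := (isCompact_Icc (a := (0:ℝ)) (b := 2 * π)).exists_bound_of_continuousOn
    hw.continuousOn
  refine ⟨|C| + 1, by positivity, fun θ => ?_⟩
  obtain ⟨ψ, hψ, he⟩ := hper.exists_mem_Ico₀ two_pi_pos θ
  rw [he]
  have := hC ψ (Ico_subset_Icc_self hψ)
  rw [Real.norm_eq_abs] at this
  linarith [le_abs_self (w ψ), le_abs_self C]

/-- A uniform lower bound for support functions based at the Steiner point, given a bound on the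
radius of curvature from above and on the perimeter from below. -/
lemma exists_supp_lower {K s : ℝ} (hK0 : 0 < K) (hs : 0 < s) :
    ∃ c, 0 < c ∧ ∀ w : ℝ → ℝ, Continuous w → Function.Periodic w (2 * π) → (∀ θ, 0 ≤ w θ) →
      (∀ θ, w θ ≤ K) → s ≤ ∫ φ in (0:ℝ)..(2 * π), w φ → ∀ θ, c ≤ supp w θ := by
  have h3 := Real.pi_gt_three
  have hδ : 0 < min 1 (s / (8 * K)) := by positivity
  set δ := min 1 (s / (8 * K)) with hδd
  have hδ1 : δ ≤ 1 := min_le_left _ _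
  have hδ2 : δ * (8 * K) ≤ s := (le_div_iff₀ (by positivity)).1 (min_le_right _ _)
  have hsin : 0 < Real.sin δ := Real.sin_pos_of_pos_of_lt_pi hδ (by linarith)
  refine ⟨δ * Real.sin δ / (2 * π) * (s / 2), by positivity, fun w hw hper h0 hK hw2 θ => ?_⟩
  refine le_trans ?_ (supp_ge hw hper h0 hK hδ.le (by linarith) θ)
  gcongr
  linarith
/-! ### Regularity of the flow -/

/-- The pointwise facts about a solution at interior times: `ρ1`, `ρ2` are the first two
`θ`-derivatives of the curvature `ρ`, and `v1`, `v2` those of the radius of curvature `ρ⁻¹`. -/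
structure FlowData (T : ℝ) (ρ ρ1 ρ2 v1 v2 : ℝ → ℝ → ℝ) : Prop where
  pos : ∀ t ∈ Ioo 0 T, ∀ θ, 0 < ρ t θ
  per : ∀ t ∈ Ioo 0 T, Function.Periodic (ρ t) (2 * π)
  closeCos : ∀ t ∈ Ioo 0 T, ∫ θ in (0:ℝ)..(2 * π), Real.cos θ / ρ t θ = 0
  closeSin : ∀ t ∈ Ioo 0 T, ∫ θ in (0:ℝ)..(2 * π), Real.sin θ / ρ t θ = 0
  cont : ContinuousOn (Function.uncurry ρ) (Ioo 0 T ×ˢ univ)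
  d1 : ∀ t ∈ Ioo 0 T, ∀ θ, HasDerivAt (ρ t) (ρ1 t θ) θ
  d2 : ∀ t ∈ Ioo 0 T, ∀ θ, HasDerivAt (ρ1 t) (ρ2 t θ) θ
  c2 : ∀ t ∈ Ioo 0 T, Continuous (ρ2 t)
  dt : ∀ t ∈ Ioo 0 T, ∀ θ, HasDerivAt (fun s => ρ s θ)
    ((ρ t θ) ^ 2 * ρ2 t θ + (ρ t θ) ^ 2 * (ρ t θ - 2 * hRatio (ρ t))) t
  dv1 : ∀ t ∈ Ioo 0 T, ∀ θ, HasDerivAt (fun x => (ρ t x)⁻¹) (v1 t θ) θ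
  dv2 : ∀ t ∈ Ioo 0 T, ∀ θ, HasDerivAt (v1 t) (v2 t θ) θ
  cv2 : ∀ t ∈ Ioo 0 T, Continuous (v2 t)
  cvt : ContinuousOn (Function.uncurry fun t θ => -ρ2 t θ + (2 * hRatio (ρ t) - ρ t θ))
    (Ioo 0 T ×ˢ univ)

lemma FlowData.dtv {T : ℝ} {ρ ρ1 ρ2 v1 v2 : ℝ → ℝ → ℝ} (H : FlowData T ρ ρ1 ρ2 v1 v2) {t : ℝ}
    (ht : t ∈ Ioo 0 T) (θ : ℝ) :
    HasDerivAt (fun s => (ρ s θ)⁻¹) (-ρ2 t θ + (2 * hRatio (ρ t) - ρ t θ)) t := by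
  have h0 := (H.pos t ht θ).ne'
  refine ((H.dt t ht θ).inv h0).congr_deriv ?_
  field_simp; ring

lemma exists_flowData {T : ℝ} {ρ : ℝ → ℝ → ℝ} (hρ : IsRCFSolution T ρ) :
    ∃ ρ1 ρ2 v1 v2, FlowData T ρ ρ1 ρ2 v1 v2 := by
  obtain ⟨hsm, hpos, hper, hcos, hsin, hpde⟩ := hρ
  have hJ : IsOpen (Ioo (0:ℝ) T) := isOpen_Ioo
  have hJI : ∀ {t}, t ∈ Ioo (0:ℝ) T → t ∈ Ico (0:ℝ) T := fun h => ⟨h.1.le, h.2⟩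
  have hR : ContDiffOn ℝ (⊤ : ℕ∞) (Function.uncurry ρ) (Ioo 0 T ×ˢ univ) :=
    hsm.mono (prod_mono Ioo_subset_Ico_self subset_rfl)
  have hV : ContDiffOn ℝ (⊤ : ℕ∞) (Function.uncurry fun t θ => (ρ t θ)⁻¹) (Ioo 0 T ×ˢ univ) :=
    hR.inv fun p hp => (hpos p.1 (hJI hp.1) p.2).ne'
  let R1 : ℝ → ℝ → ℝ := fun t θ => fderiv ℝ (Function.uncurry ρ) (t, θ) (0, 1)
  have hR1 : ContDiffOn ℝ (⊤ : ℕ∞) (Function.uncurry R1) (Ioo 0 T ×ˢ univ) :=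
    contDiffOn_fderiv_apply hJ hR _
  let R2 : ℝ → ℝ → ℝ := fun t θ => fderiv ℝ (Function.uncurry R1) (t, θ) (0, 1)
  have hR2 : ContDiffOn ℝ (⊤ : ℕ∞) (Function.uncurry R2) (Ioo 0 T ×ˢ univ) :=
    contDiffOn_fderiv_apply hJ hR1 _
  let V1 : ℝ → ℝ → ℝ := fun t θ =>
    fderiv ℝ (Function.uncurry fun t θ => (ρ t θ)⁻¹) (t, θ) (0, 1)
  have hV1 : ContDiffOn ℝ (⊤ : ℕ∞) (Function.uncurry V1) (Ioo 0 T ×ˢ univ) :=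
    contDiffOn_fderiv_apply hJ hV _
  let V2 : ℝ → ℝ → ℝ := fun t θ => fderiv ℝ (Function.uncurry V1) (t, θ) (0, 1)
  have hV2 : ContDiffOn ℝ (⊤ : ℕ∞) (Function.uncurry V2) (Ioo 0 T ×ˢ univ) :=
    contDiffOn_fderiv_apply hJ hV1 _
  have d1 : ∀ t ∈ Ioo 0 T, ∀ θ, HasDerivAt (ρ t) (R1 t θ) θ :=
    fun t ht θ => hasDerivAt_space hJ hR ht θ
  have d2 : ∀ t ∈ Ioo 0 T, ∀ θ, HasDerivAt (R1 t) (R2 t θ) θ :=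
    fun t ht θ => hasDerivAt_space hJ hR1 ht θ
  have dt : ∀ t ∈ Ioo 0 T, ∀ θ, HasDerivAt (fun s => ρ s θ)
      ((ρ t θ) ^ 2 * R2 t θ + (ρ t θ) ^ 2 * (ρ t θ - 2 * hRatio (ρ t))) t := by
    intro t ht θ
    have h := (hpde t (hJI ht) θ).hasDerivAt (Ico_mem_nhds ht.1 ht.2)
    have e : iteratedDeriv 2 (ρ t) θ = R2 t θ := by
      rw [iteratedDeriv_succ, iteratedDeriv_one, show deriv (ρ t) = R1 t from
        funext fun x => (d1 t ht x).deriv, (d2 t ht θ).deriv]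
    rwa [e] at h
  refine ⟨R1, R2, V1, V2, fun t ht => hpos t (hJI ht), fun t ht => hper t (hJI ht),
    fun t ht => hcos t (hJI ht), fun t ht => hsin t (hJI ht), hR.continuousOn, d1, d2,
    fun t ht => section_continuous hR2.continuousOn ht, dt,
    fun t ht θ => hasDerivAt_space hJ hV ht θ, fun t ht θ => hasDerivAt_space hJ hV1 ht θ,
    fun t ht => section_continuous hV2.continuousOn ht, ?_⟩
  -- the PDE identifies this expression with the smooth function `∂ₜ(ρ⁻¹)`
  refine (contDiffOn_fderiv_apply hJ hV (1, 0)).continuousOn.congr ?_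
  rintro ⟨t, θ⟩ ⟨ht, -⟩
  have h0 := (hpos t (hJI ht) θ).ne'
  have h1 := (dt t ht θ).inv h0
  have h2 := hasDerivAt_time_s12 hJ hV ht θ
  refine Eq.trans ?_ (h1.unique h2)
  simp only [Function.uncurry]
  field_simp; ring

section Flow

variable {T : ℝ} {ρ ρ1 ρ2 v1 v2 : ℝ → ℝ → ℝ}

lemma FlowData.contSec (H : FlowData T ρ ρ1 ρ2 v1 v2) {t : ℝ} (ht : t ∈ Ioo 0 T) :
    Continuous (ρ t) := section_continuous H.cont ht

lemma FlowData.contInv (H : FlowData T ρ ρ1 ρ2 v1 v2) {t : ℝ} (ht : t ∈ Ioo 0 T) :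
    Continuous (fun θ => (ρ t θ)⁻¹) := (H.contSec ht).inv₀ fun θ => (H.pos t ht θ).ne'

lemma FlowData.perInv (H : FlowData T ρ ρ1 ρ2 v1 v2) {t : ℝ} (ht : t ∈ Ioo 0 T) :
    Function.Periodic (fun θ => (ρ t θ)⁻¹) (2 * π) := fun θ => by simp only [H.per t ht θ]

lemma FlowData.contInvJoint (H : FlowData T ρ ρ1 ρ2 v1 v2) :
    ContinuousOn (Function.uncurry fun t θ => (ρ t θ)⁻¹) (Ioo 0 T ×ˢ univ) :=
  H.cont.inv₀ fun p hp => (H.pos p.1 hp.1 p.2).ne'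

lemma FlowData.supp1 (H : FlowData T ρ ρ1 ρ2 v1 v2) {t : ℝ} (ht : t ∈ Ioo 0 T) (θ : ℝ) :
    HasDerivAt (supp fun x => (ρ t x)⁻¹) (supp (v1 t) θ) θ :=
  supp_hasDerivAt (H.dv1 t ht)
    (continuous_iff_continuousAt.2 fun x => (H.dv2 t ht x).continuousAt) θ

lemma FlowData.supp2 (H : FlowData T ρ ρ1 ρ2 v1 v2) {t : ℝ} (ht : t ∈ Ioo 0 T) (θ : ℝ) :
    HasDerivAt (supp (v1 t)) ((ρ t θ)⁻¹ - supp (fun x => (ρ t x)⁻¹) θ) θ :=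
  supp_hasDerivAt_two (H.dv1 t ht) (H.dv2 t ht) (H.cv2 t ht) (H.perInv ht)
    (by simpa only [div_eq_mul_inv] using H.closeCos t ht)
    (by simpa only [div_eq_mul_inv] using H.closeSin t ht) θ

lemma supp_continuousOn {w : ℝ → ℝ → ℝ}
    (hw : ContinuousOn (Function.uncurry w) (Ioo 0 T ×ˢ univ)) :
    ContinuousOn (Function.uncurry fun t θ => supp (w t) θ) (Ioo 0 T ×ˢ univ) := by
  refine continuousOn_integral_param_s12 (X := ℝ × ℝ) (isOpen_Ioo.prod isOpen_univ)
    (f := fun p φ => kern φ * w p.1 (p.2 + φ)) ?_ 0 (2 * π)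
  have hk := kern_continuous
  refine ContinuousOn.mul (f := fun q : (ℝ × ℝ) × ℝ => kern q.2)
    (g := fun q : (ℝ × ℝ) × ℝ => w q.1.1 (q.1.2 + q.2)) (by fun_prop) ?_
  exact hw.comp (f := fun q : (ℝ × ℝ) × ℝ => (q.1.1, q.1.2 + q.2)) (by fun_prop)
    fun q hq => ⟨hq.1.1, mem_univ _⟩

/-- The support function moves with the outward normal speed `2h - ρ`, up to the translation which
keeps the origin at the Steiner point. -/
lemma FlowData.suppt (H : FlowData T ρ ρ1 ρ2 v1 v2) {t : ℝ} (ht : t ∈ Ioo 0 T) (θ : ℝ) :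
    supp (fun x => -ρ2 t x + (2 * hRatio (ρ t) - ρ t x)) θ
      = 2 * hRatio (ρ t) - ρ t θ + firstMode (ρ t) θ := by
  have hc := H.contSec ht
  have h1 := supp_green (f := fun x => 2 * hRatio (ρ t) - ρ t x) (f1 := fun x => -ρ1 t x)
    (f2 := fun x => -ρ2 t x) (fun x => (H.d1 t ht x).const_sub _)
    (fun x => (H.d2 t ht x).neg) (H.c2 t ht).neg
    (fun x => by simp only [H.per t ht x]) θ
  rw [h1]
  have h2 : firstMode (fun x => 2 * hRatio (ρ t) - ρ t x) θ = -firstMode (ρ t) θ := by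
    unfold firstMode
    simp only [mul_sub]
    rw [intervalIntegral.integral_sub (Continuous.intervalIntegrable (by fun_prop) _ _)
      (Continuous.intervalIntegrable (by fun_prop) _ _),
      intervalIntegral.integral_sub (Continuous.intervalIntegrable (by fun_prop) _ _)
      (Continuous.intervalIntegrable (by fun_prop) _ _)]
    simp only [intervalIntegral.integral_mul_const, integral_cos, integral_sin]
    simp only [Real.sin_two_pi, Real.cos_two_pi, Real.sin_zero, Real.cos_zero]
    ring
  rw [h2]; ring

lemma FlowData.supp_dt (H : FlowData T ρ ρ1 ρ2 v1 v2) {t : ℝ} (ht : t ∈ Ioo 0 T) (θ : ℝ) :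
    HasDerivAt (fun s => supp (fun x => (ρ s x)⁻¹) θ)
      (supp (fun x => -ρ2 t x + (2 * hRatio (ρ t) - ρ t x)) θ) t := by
  have hk := kern_continuous
  have aux : ∀ w : ℝ → ℝ → ℝ, ContinuousOn (Function.uncurry w) (Ioo 0 T ×ˢ univ) →
      ContinuousOn (Function.uncurry fun t φ => kern φ * w t (θ + φ)) (Ioo 0 T ×ˢ univ) := by
    intro w hw
    refine ContinuousOn.mul (f := fun q : ℝ × ℝ => kern q.2)
      (g := fun q : ℝ × ℝ => w q.1 (θ + q.2)) (by fun_prop) ?_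
    exact hw.comp (f := fun q : ℝ × ℝ => (q.1, θ + q.2)) (by fun_prop)
      fun q hq => ⟨hq.1, mem_univ _⟩
  exact hasDerivAt_integral_param_s12 isOpen_Ioo (aux _ H.contInvJoint) (aux _ H.cvt)
    (fun s hs φ => (H.dtv hs (θ + φ)).const_mul (kern φ)) 0 (2 * π) ht

/-! ### Perimeter, area and their ratio -/

lemma perim_eq (r : ℝ → ℝ) : perim r = ∫ φ in (0:ℝ)..(2 * π), (r φ)⁻¹ := by
  simp [perim]

lemma FlowData.perim_pos (H : FlowData T ρ ρ1 ρ2 v1 v2) {t : ℝ} (ht : t ∈ Ioo 0 T) :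
    0 < perim (ρ t) := by
  rw [perim_eq]
  exact intervalIntegral.intervalIntegral_pos_of_pos
    ((H.contInv ht).intervalIntegrable _ _) (fun x => inv_pos.2 (H.pos t ht x)) two_pi_pos

lemma FlowData.area_eq (H : FlowData T ρ ρ1 ρ2 v1 v2) {t : ℝ} (ht : t ∈ Ioo 0 T) :
    encArea (ρ t)
      = (1 / 2) * ∫ θ in (0:ℝ)..(2 * π), supp (fun x => (ρ t x)⁻¹) θ * (ρ t θ)⁻¹ :=
  encArea_eq (H.contSec ht) (fun θ => (H.pos t ht θ).ne') (H.closeCos t ht) (H.closeSin t ht)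
    (H.supp1 ht) (H.supp2 ht)

lemma FlowData.contSupp (H : FlowData T ρ ρ1 ρ2 v1 v2) {t : ℝ} (ht : t ∈ Ioo 0 T) :
    Continuous (supp fun x => (ρ t x)⁻¹) :=
  continuous_iff_continuousAt.2 fun x => (H.supp1 ht x).continuousAt

lemma FlowData.area_pos (H : FlowData T ρ ρ1 ρ2 v1 v2) {t : ℝ} (ht : t ∈ Ioo 0 T) :
    0 < encArea (ρ t) := by
  obtain ⟨K, hK0, hK⟩ := exists_bound_of_periodic (H.contInv ht) (H.perInv ht)
  obtain ⟨c, hc, hcs⟩ := exists_supp_lower hK0 (H.perim_pos ht)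
  have h := hcs _ (H.contInv ht) (H.perInv ht) (fun θ => (inv_pos.2 (H.pos t ht θ)).le) hK
    (perim_eq _).le
  rw [H.area_eq ht]
  refine mul_pos one_half_pos (intervalIntegral.intervalIntegral_pos_of_pos
    (((H.contSupp ht).mul (H.contInv ht)).intervalIntegrable _ _) (fun θ => ?_) two_pi_pos)
  exact mul_pos (hc.trans_le (h θ)) (inv_pos.2 (H.pos t ht θ))

/-- A weak isoperimetric inequality, with constant `4` in place of `4π`. -/
lemma FlowData.isoperimetric (H : FlowData T ρ ρ1 ρ2 v1 v2) {t : ℝ} (ht : t ∈ Ioo 0 T) :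
    4 * encArea (ρ t) ≤ perim (ρ t) ^ 2 := by
  have h1 : ∀ θ, supp (fun x => (ρ t x)⁻¹) θ ≤ (1 / 2) * perim (ρ t) := by
    rw [perim_eq]
    exact supp_le (H.contInv ht) (H.perInv ht) fun θ => (inv_pos.2 (H.pos t ht θ)).le
  have h2 : ∫ θ in (0:ℝ)..(2 * π), supp (fun x => (ρ t x)⁻¹) θ * (ρ t θ)⁻¹
      ≤ ∫ θ in (0:ℝ)..(2 * π), (1 / 2) * perim (ρ t) * (ρ t θ)⁻¹ := by
    have := H.contInv ht
    exact intervalIntegral.integral_mono_on two_pi_pos.le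
      (((H.contSupp ht).mul (H.contInv ht)).intervalIntegrable _ _)
      (Continuous.intervalIntegrable (by fun_prop) _ _)
      fun θ _ => mul_le_mul_of_nonneg_right (h1 θ) (inv_pos.2 (H.pos t ht θ)).le
  rw [intervalIntegral.integral_const_mul, ← perim_eq] at h2
  rw [H.area_eq ht]
  nlinarith

lemma FlowData.hRatio_nonneg (H : FlowData T ρ ρ1 ρ2 v1 v2) {t : ℝ} (ht : t ∈ Ioo 0 T) :
    0 ≤ hRatio (ρ t) := (div_pos (H.perim_pos ht) (H.area_pos ht)).le

lemma FlowData.area_dt (H : FlowData T ρ ρ1 ρ2 v1 v2) {t : ℝ} (ht : t ∈ Ioo 0 T) :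
    HasDerivAt (fun s => encArea (ρ s)) (2 * hRatio (ρ t) * perim (ρ t) - 2 * π) t := by
  have hpi := Real.pi_pos
  have h0 : HasDerivAt
      (fun s => (1 / 2) * ∫ θ in (0:ℝ)..(2 * π), supp (fun x => (ρ s x)⁻¹) θ * (ρ s θ)⁻¹)
      ((1 / 2) * ∫ θ in (0:ℝ)..(2 * π),
        (supp (fun x => -ρ2 t x + (2 * hRatio (ρ t) - ρ t x)) θ * (ρ t θ)⁻¹
        + supp (fun x => (ρ t x)⁻¹) θ * (-ρ2 t θ + (2 * hRatio (ρ t) - ρ t θ)))) t :=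
    (hasDerivAt_integral_param_s12 isOpen_Ioo
      (f := fun s θ => supp (fun x => (ρ s x)⁻¹) θ * (ρ s θ)⁻¹)
      (f' := fun s θ => supp (fun x => -ρ2 s x + (2 * hRatio (ρ s) - ρ s x)) θ * (ρ s θ)⁻¹
        + supp (fun x => (ρ s x)⁻¹) θ * (-ρ2 s θ + (2 * hRatio (ρ s) - ρ s θ)))
      ((supp_continuousOn H.contInvJoint).mul H.contInvJoint)
      (((supp_continuousOn H.cvt).mul H.contInvJoint).add
        ((supp_continuousOn H.contInvJoint).mul H.cvt))
      (fun s hs φ => (H.supp_dt hs φ).mul (H.dtv hs φ)) 0 (2 * π) ht).const_mul _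
  have heq : (fun s => encArea (ρ s)) =ᶠ[𝓝 t]
      (fun s => (1 / 2) * ∫ θ in (0:ℝ)..(2 * π), supp (fun x => (ρ s x)⁻¹) θ * (ρ s θ)⁻¹) := by
    filter_upwards [isOpen_Ioo.mem_nhds ht] with s hs using H.area_eq hs
  refine (h0.congr_of_eventuallyEq heq).congr_deriv ?_
  have hc := H.contSec ht
  have hv := H.contInv ht
  have hu := H.contSupp ht
  have h2 := H.c2 t ht
  simp only [H.suppt ht]
  set h := hRatio (ρ t) with hh
  -- `∫ u (f'' + f) = ∫ (u'' + u) f` for the normal speed `f = 2h - ρ`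
  have green : ∫ θ in (0:ℝ)..(2 * π), supp (fun x => (ρ t x)⁻¹) θ * (-ρ2 t θ + (2 * h - ρ t θ))
      = ∫ θ in (0:ℝ)..(2 * π), (ρ t θ)⁻¹ * (2 * h - ρ t θ) := by
    have p0 : ∀ w : ℝ → ℝ, Function.Periodic w (2 * π) → w (2 * π) = w 0 := fun w hw => by
      simpa using hw 0
    have pf1 : Function.Periodic (ρ1 t) (2 * π) := fun x => by
      have := ((H.d1 t ht (x + 2 * π)).comp_add_const x (2 * π))
      simp only [H.per t ht _] at this
      exact this.unique (H.d1 t ht x)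
    have pv1 : Function.Periodic (v1 t) (2 * π) := fun x => by
      have := ((H.dv1 t ht (x + 2 * π)).comp_add_const x (2 * π))
      simp only [H.per t ht _] at this
      exact this.unique (H.dv1 t ht x)
    have := green_identity (a := 0) (b := 2 * π) (H.supp1 ht) (H.supp2 ht) (by fun_prop)
      (f := fun x => 2 * h - ρ t x) (f1 := fun x => -ρ1 t x)
      (f2 := fun x => -ρ2 t x) (fun x => (H.d1 t ht x).const_sub _)
      (fun x => (H.d2 t ht x).neg) h2.neg
      (by simp only [p0 _ pf1, p0 _ (H.per t ht), p0 _ (supp_periodic pv1),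
            p0 _ (supp_periodic (H.perInv ht))])
    simpa only [sub_add_cancel] using this
  -- translations do not change the area, since the curve closes up
  have hmode : ∫ θ in (0:ℝ)..(2 * π), firstMode (ρ t) θ * (ρ t θ)⁻¹ = 0 := by
    set A := ∫ β in (0:ℝ)..(2 * π), Real.cos β * ρ t β with hA
    set B := ∫ β in (0:ℝ)..(2 * π), Real.sin β * ρ t β with hB
    have e : ∀ θ, firstMode (ρ t) θ * (ρ t θ)⁻¹
        = A / π * (Real.cos θ / ρ t θ) + B / π * (Real.sin θ / ρ t θ) := fun θ => by
      simp only [firstMode, ← hA, ← hB]; ring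
    simp only [e]
    have hne : ∀ θ, ρ t θ ≠ 0 := fun θ => (H.pos t ht θ).ne'
    have cc : Continuous fun θ => Real.cos θ / ρ t θ := Real.continuous_cos.div hc hne
    have cs : Continuous fun θ => Real.sin θ / ρ t θ := Real.continuous_sin.div hc hne
    rw [intervalIntegral.integral_add (Continuous.intervalIntegrable (by fun_prop) _ _)
      (Continuous.intervalIntegrable (by fun_prop) _ _),
      intervalIntegral.integral_const_mul, intervalIntegral.integral_const_mul,
      H.closeCos t ht, H.closeSin t ht]
    ring
  have hfm : Continuous (firstMode (ρ t)) := by unfold firstMode; fun_prop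
  have hfv : ∫ θ in (0:ℝ)..(2 * π), (ρ t θ)⁻¹ * (2 * h - ρ t θ) = 2 * h * perim (ρ t) - 2 * π := by
    have e : ∀ θ, (ρ t θ)⁻¹ * (2 * h - ρ t θ) = 2 * h * (ρ t θ)⁻¹ - 1 := fun θ => by
      have := (H.pos t ht θ).ne'
      field_simp
    simp only [e]
    rw [intervalIntegral.integral_sub (Continuous.intervalIntegrable (by fun_prop) _ _)
      (by simp), intervalIntegral.integral_const_mul, ← perim_eq]
    simp
  have split : ∀ θ, (2 * h - ρ t θ + firstMode (ρ t) θ) * (ρ t θ)⁻¹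
        + supp (fun x => (ρ t x)⁻¹) θ * (-ρ2 t θ + (2 * h - ρ t θ))
      = (ρ t θ)⁻¹ * (2 * h - ρ t θ) + firstMode (ρ t) θ * (ρ t θ)⁻¹
        + supp (fun x => (ρ t x)⁻¹) θ * (-ρ2 t θ + (2 * h - ρ t θ)) := fun θ => by ring
  simp only [split]
  rw [intervalIntegral.integral_add (Continuous.intervalIntegrable (by fun_prop) _ _)
      (Continuous.intervalIntegrable (by fun_prop) _ _),
    intervalIntegral.integral_add (Continuous.intervalIntegrable (by fun_prop) _ _)
      (Continuous.intervalIntegrable (by fun_prop) _ _), green, hmode, hfv]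
  ring

/-- The area increases, since `λ' = 2σ²/λ - 2π`. -/
lemma FlowData.area_mono (H : FlowData T ρ ρ1 ρ2 v1 v2) :
    MonotoneOn (fun s => encArea (ρ s)) (Ioo 0 T) := by
  refine monotoneOn_of_deriv_nonneg (convex_Ioo 0 T)
    (fun t ht => (H.area_dt ht).continuousAt.continuousWithinAt) ?_ ?_
  · rw [interior_Ioo]
    exact fun t ht => (H.area_dt ht).differentiableAt.differentiableWithinAt
  · rw [interior_Ioo]
    intro t ht
    rw [(H.area_dt ht).deriv]
    have h1 := H.isoperimetric ht
    have h2 := H.area_pos ht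
    have h3 : 4 ≤ hRatio (ρ t) * perim (ρ t) := by
      rw [hRatio, div_mul_eq_mul_div, le_div_iff₀ h2]
      linarith [sq (perim (ρ t))]
    linarith [Real.pi_le_four]

/-! ### The two maximum principle estimates -/

/-- The curvature stays bounded away from zero on finite time intervals. -/
lemma FlowData.exists_inv_bound (H : FlowData T ρ ρ1 ρ2 v1 v2) {a : ℝ} (ha : a ∈ Ioo 0 T) :
    ∃ K, 0 < K ∧ ∀ t ∈ Ico a T, ∀ θ, (ρ t θ)⁻¹ ≤ K := by
  have hsub : ∀ {t}, t ∈ Ico a T → t ∈ Ioo 0 T := fun h => ⟨ha.1.trans_le h.1, h.2⟩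
  obtain ⟨K0, hK0, hK⟩ := exists_bound_of_periodic (H.contInv ha) (H.perInv ha)
  have hl := H.area_pos ha
  set l := encArea (ρ a) with hldef
  set C := 4 * π / l with hC
  have hC0 : 0 < C := by positivity
  have key : ∀ t ∈ Ico a T, ∀ θ, Real.exp (-C * t) * (ρ t θ)⁻¹ ≤ Real.exp (-C * a) * K0 := by
    refine max_principle (F := fun t θ => Real.exp (-C * t) * (ρ t θ)⁻¹) ?_ ?_ ?_ ?_
    · refine ContinuousOn.mul (f := fun q : ℝ × ℝ => Real.exp (-C * q.1)) (by fun_prop)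
        (H.contInvJoint.mono (prod_mono (fun t ht => hsub ht) subset_rfl))
    · intro t ht θ
      simp only [H.per t (hsub ht) θ]
    · exact fun θ => mul_le_mul_of_nonneg_left (hK θ) (Real.exp_pos _).le
    · intro t ht θ _ hmax
      have htJ : t ∈ Ioo 0 T := hsub ⟨ht.1.le, ht.2⟩
      have hE := Real.exp_pos (-C * t)
      have hsp : ∀ φ, (ρ t φ)⁻¹ ≤ (ρ t θ)⁻¹ := fun φ =>
        le_of_mul_le_mul_left (hmax t (right_mem_Icc.2 ht.1.le) φ) hE
      have hmin : ∀ φ, -ρ t φ ≤ -ρ t θ := fun φ =>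
        neg_le_neg ((inv_le_inv₀ (H.pos t htJ φ) (H.pos t htJ θ)).1 (hsp φ))
      have h2 := second_deriv_nonpos_of_max (g := fun x => -ρ t x) (g1 := fun x => -ρ1 t x)
        (fun y => (H.d1 t htJ y).neg) ((H.d2 t htJ θ).neg) hmin
      have hexp : HasDerivAt (fun s => Real.exp (-C * s)) (Real.exp (-C * t) * (-C)) t := by
        simpa using ((hasDerivAt_id t).const_mul (-C)).exp
      have hd := deriv_nonneg_of_left_max ht.1 (hexp.mul (H.dtv htJ θ))
        (fun s hs => hmax s hs θ)
      -- at the maximum, `h` is controlled by the maximal radius of curvature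
      have hσ : perim (ρ t) ≤ 2 * π * (ρ t θ)⁻¹ := by
        rw [perim_eq]
        have := intervalIntegral.integral_mono_on (a := 0) (b := 2 * π) two_pi_pos.le
          ((H.contInv htJ).intervalIntegrable _ _)
          (intervalIntegrable_const (c := (ρ t θ)⁻¹) (μ := volume)) fun φ _ => hsp φ
        simpa using this
      have hA : l ≤ encArea (ρ t) := H.area_mono ha htJ ht.1.le
      have hh : 2 * hRatio (ρ t) ≤ C * (ρ t θ)⁻¹ := by
        have h1 : hRatio (ρ t) ≤ 2 * π * (ρ t θ)⁻¹ / l := by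
          unfold hRatio
          have := (H.perim_pos htJ).le.trans hσ
          gcongr
        calc 2 * hRatio (ρ t) ≤ 2 * (2 * π * (ρ t θ)⁻¹ / l) := by linarith
          _ = C * (ρ t θ)⁻¹ := by rw [hC]; ring
      have hr := H.pos t htJ θ
      have hneg : -C * (ρ t θ)⁻¹ + (-ρ2 t θ + (2 * hRatio (ρ t) - ρ t θ)) < 0 := by linarith
      nlinarith [mul_neg_of_pos_of_neg hE hneg]
  refine ⟨Real.exp (C * T) * (Real.exp (-C * a) * K0), by positivity, fun t ht θ => ?_⟩
  have h1 := key t ht θ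
  have h2 : (ρ t θ)⁻¹ = Real.exp (C * t) * (Real.exp (-C * t) * (ρ t θ)⁻¹) := by
    rw [← mul_assoc, ← Real.exp_add]; simp
  rw [h2]
  have h3 : Real.exp (C * t) ≤ Real.exp (C * T) := Real.exp_le_exp.2 (by nlinarith [ht.2])
  exact mul_le_mul h3 h1 (mul_pos (Real.exp_pos _) (inv_pos.2 (H.pos t (hsub ht) θ))).le
    (Real.exp_pos _).le

lemma firstMode_abs_le {f : ℝ → ℝ} {m : ℝ} (hf : ∀ θ, |f θ| ≤ m) (θ : ℝ) :
    |firstMode f θ| ≤ 4 * m := by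
  have hm : 0 ≤ m := (abs_nonneg _).trans (hf 0)
  have hpi := Real.pi_pos
  have b : ∀ g : ℝ → ℝ, (∀ x, |g x| ≤ 1) →
      |∫ β in (0:ℝ)..(2 * π), g β * f β| ≤ m * (2 * π) := by
    intro g hg
    have := intervalIntegral.norm_integral_le_of_norm_le_const (a := 0) (b := 2 * π)
      (f := fun β => g β * f β) (C := m) fun β _ => by
        rw [Real.norm_eq_abs, abs_mul]
        nlinarith [hg β, hf β, abs_nonneg (g β), abs_nonneg (f β)]
    rwa [sub_zero, abs_of_pos two_pi_pos, Real.norm_eq_abs] at this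
  have h1 := b _ Real.abs_cos_le_one
  have h2 := b _ Real.abs_sin_le_one
  unfold firstMode
  rw [abs_div, abs_of_pos hpi, div_le_iff₀ hpi]
  refine (abs_add_le _ _).trans ?_
  rw [abs_mul, abs_mul]
  have h3 := mul_le_mul (Real.abs_cos_le_one θ) h1 (abs_nonneg _) zero_le_one
  have h4 := mul_le_mul (Real.abs_sin_le_one θ) h2 (abs_nonneg _) zero_le_one
  linarith

/-- Tso's estimate: the quotient `ρ / (u - c)` is bounded, where `u` is the support function. -/
lemma FlowData.exists_bound (H : FlowData T ρ ρ1 ρ2 v1 v2) {a : ℝ} (ha : a ∈ Ioo 0 T) :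
    ∃ M, ∀ t ∈ Ico a T, ∀ θ, ρ t θ ≤ M := by
  have hsub : ∀ {t}, t ∈ Ico a T → t ∈ Ioo 0 T := fun h => ⟨ha.1.trans_le h.1, h.2⟩
  obtain ⟨K, hK0, hK⟩ := H.exists_inv_bound ha
  have hl := H.area_pos ha
  set l := encArea (ρ a) with hldef
  have hσlow : ∀ t ∈ Ico a T, Real.sqrt (4 * l) ≤ ∫ φ in (0:ℝ)..(2 * π), (ρ t φ)⁻¹ := by
    intro t ht
    rw [← perim_eq]
    refine Real.sqrt_le_iff.2 ⟨(H.perim_pos (hsub ht)).le, ?_⟩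
    have h1 : l ≤ encArea (ρ t) := H.area_mono ha (hsub ht) ht.1
    linarith [H.isoperimetric (hsub ht)]
  obtain ⟨c', hc'0, hc'⟩ := exists_supp_lower hK0 (s := Real.sqrt (4 * l)) (by positivity)
  obtain ⟨c, hcd⟩ : ∃ c, c = c' / 2 := ⟨_, rfl⟩
  have hc0 : 0 < c := by rw [hcd]; positivity
  set U := π * K with hU
  have hU0 : 0 < U := by positivity
  have hlow : ∀ t ∈ Ico a T, ∀ θ, 2 * c ≤ supp (fun x => (ρ t x)⁻¹) θ := fun t ht θ => by
    have := hc' _ (H.contInv (hsub ht)) (H.perInv (hsub ht))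
      (fun θ => (inv_pos.2 (H.pos t (hsub ht) θ)).le) (hK t ht) (hσlow t ht) θ
    linarith
  have hup : ∀ t ∈ Ico a T, ∀ θ, supp (fun x => (ρ t x)⁻¹) θ ≤ U := fun t ht θ => by
    have h1 := supp_le (H.contInv (hsub ht)) (H.perInv (hsub ht))
      (fun θ => (inv_pos.2 (H.pos t (hsub ht) θ)).le) θ
    have h2 := intervalIntegral.integral_mono_on (a := 0) (b := 2 * π) two_pi_pos.le
      ((H.contInv (hsub ht)).intervalIntegrable _ _)
      (intervalIntegrable_const (c := K) (μ := volume)) fun φ _ => hK t ht φ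
    simp only [intervalIntegral.integral_const, smul_eq_mul, sub_zero] at h2
    linarith
  obtain ⟨M0, hM0, hM0b⟩ := exists_bound_of_periodic (w := fun θ => ρ a θ / c)
    ((H.contSec ha).div_const c) (fun θ => by simp only [H.per a ha θ])
  set M := max M0 (6 * U / c ^ 3) with hM
  have key : ∀ t ∈ Ico a T, ∀ θ, ρ t θ / (supp (fun x => (ρ t x)⁻¹) θ - c) ≤ M := by
    refine max_principle (F := fun t θ => ρ t θ / (supp (fun x => (ρ t x)⁻¹) θ - c)) ?_ ?_ ?_ ?_
    · have hm : Ico a T ×ˢ (univ : Set ℝ) ⊆ Ioo 0 T ×ˢ univ :=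
        prod_mono (fun t ht => hsub ht) subset_rfl
      refine ContinuousOn.div (f := fun q : ℝ × ℝ => ρ q.1 q.2) (H.cont.mono hm)
        (((supp_continuousOn H.contInvJoint).mono hm).sub continuousOn_const) ?_
      rintro ⟨t, θ⟩ ⟨ht, -⟩
      have := hlow t ht θ
      exact ne_of_gt (by simp only; linarith)
    · intro t ht θ
      simp only [H.per t (hsub ht) θ, supp_periodic (H.perInv (hsub ht)) θ]
    · intro θ
      refine le_trans ?_ ((hM0b θ).trans (le_max_left _ _))
      exact div_le_div_of_nonneg_left (H.pos a ha θ).le hc0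
        (by linarith [hlow a (left_mem_Ico.2 ha.2) θ])
    · intro t ht θ hlt hmax
      have htI : t ∈ Ico a T := ⟨ht.1.le, ht.2⟩
      have htJ : t ∈ Ioo 0 T := hsub htI
      obtain ⟨Q, hQ⟩ : ∃ Q, Q = ρ t θ / (supp (fun x => (ρ t x)⁻¹) θ - c) := ⟨_, rfl⟩
      rw [← hQ] at hlt
      simp only [← hQ] at hmax
      have hden : ∀ s ∈ Ico a T, ∀ φ, 0 < supp (fun x => (ρ s x)⁻¹) φ - c := fun s hs φ => by
        linarith [hlow s hs φ]
      have heq : ρ t θ = Q * (supp (fun x => (ρ t x)⁻¹) θ - c) := by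
        rw [hQ, div_mul_cancel₀ _ (hden t htI θ).ne']
      have hle : ∀ s ∈ Icc a t, ∀ φ, ρ s φ ≤ Q * (supp (fun x => (ρ s x)⁻¹) φ - c) :=
        fun s hs φ => (div_le_iff₀ (hden s ⟨hs.1, hs.2.trans_lt ht.2⟩ φ)).1 (hmax s hs φ)
      -- first- and second-order conditions for `ρ - Q (u - c)`, whose maximum value is `0`
      have h2 := second_deriv_nonpos_of_max
        (g := fun x => ρ t x - Q * (supp (fun x => (ρ t x)⁻¹) x - c))
        (g1 := fun x => ρ1 t x - Q * supp (v1 t) x)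
        (fun y => (H.d1 t htJ y).sub (((H.supp1 htJ y).sub_const c).const_mul Q))
        ((H.d2 t htJ θ).sub ((H.supp2 htJ θ).const_mul Q))
        (fun φ => by linarith [hle t (right_mem_Icc.2 ht.1.le) φ])
      have hd := deriv_nonneg_of_left_max ht.1
        ((H.dt t htJ θ).sub (((H.supp_dt htJ θ).sub_const c).const_mul Q))
        (fun s hs => by
          have := hle s hs θ
          simp only [Pi.sub_apply]
          linarith)
      rw [H.suppt htJ θ] at hd
      have hr := H.pos t htJ θ
      have hh := H.hRatio_nonneg htJ
      have hQ0 : 0 < Q := by rw [hQ]; exact div_pos hr (hden t htI θ)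
      have hmode : |firstMode (ρ t) θ| ≤ 4 * (Q * U) := by
        refine firstMode_abs_le (fun φ => ?_) θ
        rw [abs_of_pos (H.pos t htJ φ)]
        refine (hle t (right_mem_Icc.2 ht.1.le) φ).trans ?_
        exact mul_le_mul_of_nonneg_left (by linarith [hup t htI φ]) hQ0.le
      have hp := (abs_le.1 hmode).1
      have hu1 := hlow t htI θ
      have hu2 := hup t htI θ
      have hQM : 6 * U / c ^ 3 < Q := (le_max_right _ _).trans_lt hlt
      have hvr : (ρ t θ)⁻¹ * ρ t θ = 1 := inv_mul_cancel₀ hr.ne'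
      generalize supp (fun x => (ρ t x)⁻¹) θ = u at *
      generalize firstMode (ρ t) θ = p at *
      generalize hRatio (ρ t) = h at *
      generalize ρ2 t θ = r2 at *
      generalize (ρ t θ)⁻¹ = v at *
      generalize ρ t θ = r at *
      have e1 : r ^ 2 * r2 ≤ r ^ 2 * (Q * (v - u)) :=
        mul_le_mul_of_nonneg_left (by linarith) (sq_nonneg r)
      have e2 : r ^ 2 * (Q * (v - u)) + r ^ 2 * (r - 2 * h)
          = Q * r - c * Q * r ^ 2 - 2 * h * r ^ 2 := by
        linear_combination Q * r * hvr + r ^ 2 * heq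
      have e3 : 0 ≤ h * r ^ 2 := mul_nonneg hh (sq_nonneg r)
      have e4 : 0 ≤ Q * h := mul_nonneg hQ0.le hh
      have e5 : 0 ≤ Q * (2 * r - c * r ^ 2 - p) := by linarith
      have e6 : c * r ^ 2 ≤ 2 * r - p := by
        linarith [nonneg_of_mul_nonneg_right e5 hQ0]
      have e7 : r ≤ Q * U := heq.le.trans (mul_le_mul_of_nonneg_left (by linarith) hQ0.le)
      have e8 : Q * c ≤ r := le_trans (mul_le_mul_of_nonneg_left (by linarith) hQ0.le) heq.ge
      have e9 : c * (Q * c) ^ 2 ≤ c * r ^ 2 := by gcongr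
      have e10 : Q * (c ^ 3 * Q) ≤ Q * (6 * U) := by linarith
      have e11 := le_of_mul_le_mul_left e10 hQ0
      rw [div_lt_iff₀ (by positivity)] at hQM
      linarith
  refine ⟨M * U, fun t ht θ => ?_⟩
  have hd : 0 < supp (fun x => (ρ t x)⁻¹) θ - c := by linarith [hlow t ht θ]
  have h1 := (div_le_iff₀ hd).1 (key t ht θ)
  refine h1.trans (mul_le_mul_of_nonneg_left (by linarith [hup t ht θ]) ?_)
  exact hM0.le.trans (le_max_left _ _)

end Flow

/-- If `T < ∞` (here `T` is a real number), the curvature along the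
renormalized curvature flow is uniformly bounded on `[0,T) × ℝ`. -/
theorem stmt12 (T : ℝ) (ρ : ℝ → ℝ → ℝ) (hρ : IsRCFSolution T ρ) :
    ∃ M : ℝ, ∀ t ∈ Ico (0:ℝ) T, ∀ θ : ℝ, ρ t θ ≤ M := by
  rcases le_or_gt T 0 with hT | hT
  · exact ⟨0, fun t ht => absurd (ht.1.trans_lt ht.2) (not_lt.2 hT)⟩
  obtain ⟨ρ1, ρ2, v1, v2, H⟩ := exists_flowData hρ
  obtain ⟨M, hM⟩ := H.exists_bound (a := T / 2) ⟨by linarith, by linarith⟩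
  -- up to time `T / 2`, continuity and periodicity suffice
  obtain ⟨C, hC⟩ := ((isCompact_Icc (a := (0:ℝ)) (b := T / 2)).prod
    (isCompact_Icc (a := (0:ℝ)) (b := 2 * π))).exists_bound_of_continuousOn
    (hρ.1.continuousOn.mono (prod_mono (fun t ht => ⟨ht.1, by linarith [ht.2]⟩)
      (subset_univ _)))
  refine ⟨max M C, fun t ht θ => ?_⟩
  rcases le_total (T / 2) t with h | h
  · exact (hM t ⟨h, ht.2⟩ θ).trans (le_max_left _ _)
  · obtain ⟨ψ, hψ, he⟩ := Function.Periodic.exists_mem_Ico₀ (f := ρ t) (hρ.2.2.1 t ht)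
      two_pi_pos θ
    rw [he]
    have := hC (t, ψ) ⟨⟨ht.1, h⟩, Ico_subset_Icc_self hψ⟩
    exact (le_abs_self _).trans (this.trans (le_max_right _ _))
end
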